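/- Let c ∈ (1,∞) and a_n = ⌊n^c⌋ for n ≥ 1. Define τ = (c−1)/2 if 1 < c < 3/2, τ = 1/4 if 3/2 ≤ c < 2, and τ = 7/26 if c ≥ 2. Then for Lebesgue-almost all real α, for every ε > 0 there are infinitely many N with N·D_N*({a_1 α}, …, {a_N α}) ≥ N^{τ − ε}. -/

import Mathlib

open Filter MeasureTheory

/-- Star-discrepancy of the first `N` points `x 1, ..., x N` of a sequence in `[0,1)`. -/
noncomputable def starDisc (N : ℕ) (x : ℕ → ℝ) : ℝ :=
  ⨆ β : Set.Ioc (0:ℝ) 1,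
    |(((Finset.Icc 1 N).filter fun n => 0 ≤ x n ∧ x n < (β : ℝ)).card : ℝ) / N - (β : ℝ)|

/-!
On a short block `(M, M + K]`, with `M = k ^ 5` and `K = k ^ 3`, a Taylor expansion of `x ^ c` shows
that a solution of `a n₁ + a n₂ = a n₃ + a n₄` has `(n₁ - n₂) ^ 2 - (n₃ - n₄) ^ 2` determined, up to
a small error, by `n₁ + n₂` and `n₁ + n₂ - n₃ - n₄`. Factoring this difference of squares, the
divisor bound yields a nearly optimal bound for the additive energy of the block. By Hölder's
inequality the exponential sum `f x = ∑ e(a n x)` over the block then has large `L¹` norm.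

Smooth the indicators of `|f (h x)| > h D`, `1 ≤ h ≤ K`, by Lipschitz functions of `|f|` and sum
over `h`. The mean of the sum is governed by the `L¹` norm of `f`, and by Parseval and the divisor
bound its variance is much smaller than the square of its mean. Hence outside a set of measure
tending to `0` some `h` satisfies `|f (h x)| > h D`, and Koksma's inequality forces a discrepancy
of order `D` at one of the two endpoints `M` and `M + K`.
-/

open scoped Topology NNReal
open Asymptotics

theorem natCast_add_one_le_mul_pow_rpow {δ x : ℝ} (hδ : 0 < δ) (hx : 2 ≤ x) (e : ℕ) :
    (e : ℝ) + 1 ≤ (1 + 1 / (δ * Real.log 2)) * (x ^ e) ^ δ := by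
  have hexp : (1 : ℝ) + e * δ * Real.log 2 ≤ (x ^ e) ^ δ := calc
    (1 : ℝ) + e * δ * Real.log 2 ≤ Real.exp (Real.log 2 * (e * δ)) := by
      linarith [Real.add_one_le_exp (Real.log 2 * (e * δ))]
    _ = ((2 : ℝ) ^ e) ^ δ := by
      rw [← Real.rpow_natCast, ← Real.rpow_mul zero_le_two, Real.rpow_def_of_pos zero_lt_two]
    _ ≤ (x ^ e) ^ δ := by gcongr
  calc (e : ℝ) + 1
      ≤ 1 + e + e * δ * Real.log 2 + 1 / (δ * Real.log 2) := by
        have h₁ : 0 ≤ e * δ * Real.log 2 := by positivity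
        have h₂ : 0 < 1 / (δ * Real.log 2) := by positivity
        linarith
    _ = (1 + 1 / (δ * Real.log 2)) * (1 + e * δ * Real.log 2) := by field_simp; ring
    _ ≤ _ := by gcongr

theorem natCast_add_one_le_pow_rpow {δ x : ℝ} (hx : 0 ≤ x) (hδ : 2 ≤ x ^ δ) (e : ℕ) :
    (e : ℝ) + 1 ≤ (x ^ e) ^ δ := calc
  (e : ℝ) + 1 ≤ 2 ^ e := mod_cast Nat.lt_two_pow_self (n := e)
  _ ≤ (x ^ δ) ^ e := by gcongr
  _ = (x ^ e) ^ δ := Real.rpow_pow_comm hx δ e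

/-- Only the primes `p < 2 ^ (1 / δ)`, for which `p ^ δ < 2`, contribute to the constant. -/
theorem exists_card_divisors_le {δ : ℝ} (hδ : 0 < δ) :
    ∃ C : ℝ, 1 ≤ C ∧ ∀ n : ℕ, n ≠ 0 → (n.divisors.card : ℝ) ≤ C * (n : ℝ) ^ δ := by
  set C : ℝ := 1 + 1 / (δ * Real.log 2)
  have hC : 1 ≤ C := le_add_of_nonneg_right (by positivity)
  set P : ℕ := ⌈(2 : ℝ) ^ (1 / δ)⌉₊
  have hlocal (p : ℕ) (hp : p.Prime) (e : ℕ) :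
      (e : ℝ) + 1 ≤ (if p < P then C else 1) * ((p : ℝ) ^ e) ^ δ := by
    split_ifs with h
    · exact natCast_add_one_le_mul_pow_rpow hδ (mod_cast hp.two_le) e
    · rw [one_mul]
      refine natCast_add_one_le_pow_rpow p.cast_nonneg ?_ e
      rw [← Real.rpow_inv_le_iff_of_pos zero_le_two p.cast_nonneg hδ, ← one_div]
      exact (Nat.le_ceil _).trans (mod_cast not_lt.mp h)
  refine ⟨C ^ P, one_le_pow₀ hC, fun n hn => ?_⟩
  have hn' : (n : ℝ) ^ δ = ∏ p ∈ n.primeFactors, ((p : ℝ) ^ (n.factorization p)) ^ δ := by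
    rw [Real.finsetProd_rpow _ _ (fun _ _ => by positivity)]
    conv_lhs => rw [← Nat.prod_factorization_pow_eq_self hn]
    simp [Finsupp.prod]
  have hsmall : ∏ p ∈ n.primeFactors, (if p < P then C else 1) ≤ C ^ P := by
    rw [Finset.prod_ite, Finset.prod_const, Finset.prod_const_one, mul_one]
    refine pow_le_pow_right₀ hC ((Finset.card_le_card ?_).trans_eq (Finset.card_range P))
    exact fun p hp => Finset.mem_range.mpr (Finset.mem_filter.mp hp).2
  rw [Nat.card_divisors hn, hn']
  push_cast
  calc ∏ p ∈ n.primeFactors, ((n.factorization p : ℝ) + 1)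
      ≤ ∏ p ∈ n.primeFactors,
          ((if p < P then C else 1) * ((p : ℝ) ^ (n.factorization p)) ^ δ) :=
        Finset.prod_le_prod (fun _ _ => by positivity)
          fun p hp => hlocal p (Nat.prime_of_mem_primeFactors hp) _
    _ ≤ _ := by rw [Finset.prod_mul_distrib]; gcongr

theorem one_add_rpow_sub_cubic_isBigO (c : ℝ) :
    (fun t : ℝ => (1 + t) ^ c
        - (1 + c * t + c * (c - 1) / 2 * t ^ 2 + c * (c - 1) * (c - 2) / 6 * t ^ 3))
      =O[𝓝 0] fun t => t ^ 4 := by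
  have h := (Real.one_add_rpow_hasFPowerSeriesAt_zero (a := c)).isBigO_sub_partialSum_pow 4
  have hchoose₂ : Ring.choose c 2 = c * (c - 1) / 2 := by
    rw [Ring.choose_eq_smul]
    simp [Polynomial.descPochhammer_smeval_eq_ascPochhammer, Polynomial.ascPochhammer_smeval_cast,
      Polynomial.ascPochhammer_smeval_eq_eval, ascPochhammer_succ_eval, Nat.factorial]
    ring
  have hchoose₃ : Ring.choose c 3 = c * (c - 1) * (c - 2) / 6 := by
    rw [Ring.choose_eq_smul]
    simp [Polynomial.descPochhammer_smeval_eq_ascPochhammer, Polynomial.ascPochhammer_smeval_cast,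
      Polynomial.ascPochhammer_smeval_eq_eval, ascPochhammer_succ_eval, Nat.factorial]
    ring
  have hsum (t : ℝ) : (binomialSeries ℝ c).partialSum 4 t = 1 + c * t + c * (c - 1) / 2 * t ^ 2
      + c * (c - 1) * (c - 2) / 6 * t ^ 3 := by
    simp only [FormalMultilinearSeries.partialSum, Finset.sum_range_succ, binomialSeries_apply,
      hchoose₂, hchoose₃, List.ofFn_const, List.prod_replicate]
    simp
  simpa only [hsum, zero_add, Real.norm_eq_abs, (by decide : Even 4).pow_abs] using h

theorem exists_abs_one_add_rpow_sub_cubic_le (c : ℝ) :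
    ∃ C q₀ : ℝ, 0 < C ∧ 0 < q₀ ∧ ∀ t q : ℝ, |t| ≤ q → q ≤ q₀ →
      |(1 + t) ^ c - (1 + c * t + c * (c - 1) / 2 * t ^ 2
        + c * (c - 1) * (c - 2) / 6 * t ^ 3)| ≤ C * q ^ 4 := by
  obtain ⟨C, hC, h⟩ := (one_add_rpow_sub_cubic_isBigO c).exists_pos
  obtain ⟨q₀, hq₀, h⟩ := Metric.eventually_nhds_iff.mp h.bound
  refine ⟨C, q₀ / 2, hC, by positivity, fun t q ht hq => ?_⟩
  have ht₀ : dist t 0 < q₀ := by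
    rw [Real.dist_0_eq_abs]
    linarith
  calc _ ≤ C * |t ^ 4| := h ht₀
    _ = C * |t| ^ 4 := by rw [abs_pow]
    _ ≤ C * q ^ 4 := by gcongr

/-- The points `1 + t` and `1 - t` are centred at their mean, so that the cubic terms only
contribute through `u ^ 3 + v ^ 3`, which is divisible by `u + v`. -/
theorem exists_abs_rpow_quadruple_sub_le (c : ℝ) :
    ∃ C q₀ : ℝ, 0 < C ∧ 0 < q₀ ∧ ∀ t u v q : ℝ, |t| ≤ q → |u| ≤ q → |v| ≤ q → q ≤ q₀ →
      |(1 + t) ^ c + (1 - t) ^ c - (1 + u) ^ c - (1 + v) ^ c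
        - (c * (c - 1) / 2 * (2 * t ^ 2 - u ^ 2 - v ^ 2) - c * (u + v))|
        ≤ C * q ^ 2 * (|u + v| + q ^ 2) := by
  obtain ⟨C, q₀, hC, hq₀, hT⟩ := exists_abs_one_add_rpow_sub_cubic_le c
  set B : ℝ := c * (c - 1) * (c - 2) / 6
  refine ⟨3 * |B| + 4 * C, q₀, by positivity, hq₀, fun t u v q ht hu hv hq => ?_⟩
  have hcubic : |B * (u ^ 3 + v ^ 3)| ≤ 3 * |B| * q ^ 2 * |u + v| := by
    have hquad : |u ^ 2 - u * v + v ^ 2| ≤ 3 * q ^ 2 := by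
      have hu' := sq_le_sq' (abs_le.mp hu).1 (abs_le.mp hu).2
      have hv' := sq_le_sq' (abs_le.mp hv).1 (abs_le.mp hv).2
      rw [abs_le]
      constructor <;> linarith [sq_nonneg (u + v), sq_nonneg (u - v), sq_nonneg u, sq_nonneg v]
    calc |B * (u ^ 3 + v ^ 3)| = |B| * |u ^ 2 - u * v + v ^ 2| * |u + v| := by
          rw [← abs_mul, ← abs_mul]; ring_nf
      _ ≤ |B| * (3 * q ^ 2) * |u + v| := by gcongr
      _ = _ := by ring
  have h₁ := abs_le.mp (hT t q ht hq)
  have h₂ := abs_le.mp (hT (-t) q (by rwa [abs_neg]) hq)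
  have h₃ := abs_le.mp (hT u q hu hq)
  have h₄ := abs_le.mp (hT v q hv hq)
  have h₅ := abs_le.mp hcubic
  have h₆ : 0 ≤ C * q ^ 2 * |u + v| := by positivity
  have h₇ : 0 ≤ |B| * q ^ 4 := by positivity
  rw [← sub_eq_add_neg] at h₂
  rw [abs_le]
  constructor <;> linarith

theorem exists_abs_add_le_of_rpow_quadruple {c : ℝ} (hc : 1 ≤ c) :
    ∃ C q₀ : ℝ, 1 ≤ C ∧ 0 < q₀ ∧ ∀ t u v q σ : ℝ, |t| ≤ q → |u| ≤ q → |v| ≤ q → q ≤ q₀ →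
      |(1 + t) ^ c + (1 - t) ^ c - (1 + u) ^ c - (1 + v) ^ c| ≤ σ → σ ≤ 2 * q ^ 2 →
      |u + v| ≤ C * q ^ 2 ∧
      |c * (c - 1) / 2 * (2 * t ^ 2 - u ^ 2 - v ^ 2) - c * (u + v)| ≤ σ + C * q ^ 4 := by
  obtain ⟨C, q₀, hC, hq₀, h⟩ := exists_abs_rpow_quadruple_sub_le c
  set A : ℝ := c * (c - 1) / 2
  have hA : 0 ≤ A := by have := sub_nonneg.mpr hc; positivity
  set C₁ : ℝ := 2 + 4 * A + 3 * C
  refine ⟨C₁ + C * (C₁ + 1), min q₀ 1, by nlinarith, by positivity,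
    fun t u v q σ ht hu hv hq hS hσ => ?_⟩
  have hq₁ : q ≤ 1 := hq.trans (min_le_right _ _)
  have hmain := h t u v q ht hu hv (hq.trans (min_le_left _ _))
  have hquad : |A * (2 * t ^ 2 - u ^ 2 - v ^ 2)| ≤ 4 * A * q ^ 2 := by
    have ht' := sq_le_sq' (abs_le.mp ht).1 (abs_le.mp ht).2
    have hu' := sq_le_sq' (abs_le.mp hu).1 (abs_le.mp hu).2
    have hv' := sq_le_sq' (abs_le.mp hv).1 (abs_le.mp hv).2
    rw [abs_mul, abs_of_nonneg hA, mul_comm 4 A, mul_assoc]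
    gcongr
    rw [abs_le]
    constructor <;> linarith [sq_nonneg t, sq_nonneg u, sq_nonneg v]
  have hsum : |u + v| ≤ C₁ * q ^ 2 := by
    have hrough : |u + v| + q ^ 2 ≤ 3 := by nlinarith [abs_add_le u v, (abs_nonneg t).trans ht]
    have herr : C * q ^ 2 * (|u + v| + q ^ 2) ≤ C * q ^ 2 * 3 := by gcongr
    have h₁ := abs_le.mp hmain
    have h₂ := abs_le.mp hquad
    have h₃ := abs_le.mp hS
    have hcl : |c * (u + v)| ≤ C₁ * q ^ 2 := by
      rw [abs_le]
      constructor <;> linarith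
    rw [abs_mul, abs_of_nonneg (zero_le_one.trans hc)] at hcl
    exact (le_mul_of_one_le_left (abs_nonneg _) hc).trans hcl
  have hC₂ : C₁ ≤ C₁ + C * (C₁ + 1) := le_add_of_nonneg_right (by positivity)
  refine ⟨hsum.trans (by gcongr), ?_⟩
  have herr : C * q ^ 2 * (|u + v| + q ^ 2) ≤ C * q ^ 2 * (C₁ * q ^ 2 + q ^ 2) := by gcongr
  have h₁ := abs_le.mp hmain
  have h₂ := abs_le.mp hS
  have h₃ : 0 ≤ C₁ * q ^ 4 := by positivity
  rw [abs_le]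
  constructor <;> linarith

/-- For `f = (· ^ c)` and four points of a short interval with `x₁ + x₂ = s` and
`x₁ + x₂ - x₃ - x₄ = ℓ`, the value of `(x₁ - x₂) ^ 2 - (x₃ - x₄) ^ 2` for which the second order
Taylor polynomials of `f` at `s / 2` satisfy `f x₁ + f x₂ = f x₃ + f x₄`. -/
noncomputable def predictedSqDiff (c s ℓ : ℝ) : ℝ :=
  ℓ ^ 2 - 2 * ℓ * s / (c - 1)

theorem exists_abs_sub_predictedSqDiff_le_of_centred {c : ℝ} (hc : 1 < c) :
    ∃ C q₀ : ℝ, 1 ≤ C ∧ 0 < q₀ ∧ ∀ m t u v q : ℝ, 0 < m → |t| ≤ q → |u| ≤ q → |v| ≤ q →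
      q ≤ q₀ → q ≤ 1 → m ^ (-c) ≤ q ^ 2 →
      |(m * (1 + t)) ^ c + (m * (1 - t)) ^ c - (m * (1 + u)) ^ c - (m * (1 + v)) ^ c| ≤ 2 →
      |m * (u + v)| ≤ C * (m * q ^ 2) ∧
      |(2 * m * t) ^ 2 - (m * (u - v)) ^ 2 - predictedSqDiff c (2 * m) (-(m * (u + v)))|
        ≤ C * (m ^ 2 * q ^ 4 + m ^ (2 - c)) := by
  obtain ⟨C, q₀, hC, hq₀, h⟩ := exists_abs_add_le_of_rpow_quadruple hc.le
  set A : ℝ := c * (c - 1) / 2 with hA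
  have hc₁ : 0 < c - 1 := sub_pos.mpr hc
  have hC₁ : 0 < 2 * (2 + C) / A := by positivity
  refine ⟨C + 2 * (2 + C) / A, q₀, by linarith, hq₀, ?_⟩
  intro m t u v q hm ht hu hv hq hq₁ hmq hS
  have hmul (x : ℝ) (hx : |x| ≤ q) : (m * (1 + x)) ^ c = m ^ c * (1 + x) ^ c :=
    Real.mul_rpow hm.le (by linarith [(abs_le.mp hx).1])
  have hS' : |(1 + t) ^ c + (1 - t) ^ c - (1 + u) ^ c - (1 + v) ^ c| ≤ 2 * m ^ (-c) := by
    have hmc : 0 < m ^ c := Real.rpow_pos_of_pos hm c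
    rw [sub_eq_add_neg 1 t, hmul t ht, hmul (-t) (by rwa [abs_neg]), hmul u hu, hmul v hv,
      ← mul_add, ← mul_sub, ← mul_sub, abs_mul, abs_of_pos hmc] at hS
    rwa [Real.rpow_neg hm.le, ← div_eq_mul_inv, le_div_iff₀ hmc, mul_comm]
  obtain ⟨hsum, hmain⟩ := h t u v q _ ht hu hv hq hS' (by linarith)
  refine ⟨?_, ?_⟩
  · rw [abs_mul, abs_of_pos hm, mul_left_comm]
    gcongr
    exact hsum.trans (by gcongr; linarith)
  have hid : (2 * m * t) ^ 2 - (m * (u - v)) ^ 2 - predictedSqDiff c (2 * m) (-(m * (u + v)))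
      = 2 * m ^ 2 / A * (A * (2 * t ^ 2 - u ^ 2 - v ^ 2) - c * (u + v)) := by
    rw [predictedSqDiff, hA]
    field_simp
    ring
  have hm₂ : m ^ (2 - c) = m ^ 2 * m ^ (-c) := by
    rw [sub_eq_add_neg, Real.rpow_add hm, Real.rpow_two]
  calc _ ≤ 2 * m ^ 2 / A * (2 * m ^ (-c) + C * q ^ 4) := by
        rw [hid, abs_mul, abs_of_pos (by positivity)]
        gcongr
    _ = 2 / A * (C * (m ^ 2 * q ^ 4) + 2 * m ^ (2 - c)) := by rw [hm₂]; ring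
    _ ≤ 2 / A * ((2 + C) * (m ^ 2 * q ^ 4) + (2 + C) * m ^ (2 - c)) := by gcongr <;> linarith
    _ = 2 * (2 + C) / A * (m ^ 2 * q ^ 4 + m ^ (2 - c)) := by ring
    _ ≤ _ := by gcongr; linarith

theorem rpow_neg_le_sq_div {c M K : ℝ} (hc : 1 ≤ c) (hM : 1 ≤ M) (hMK : M ≤ K ^ 2) :
    M ^ (-c) ≤ (K / M) ^ 2 := by
  calc M ^ (-c) ≤ M ^ (-1 : ℝ) := Real.rpow_le_rpow_of_exponent_le hM (neg_le_neg hc)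
    _ = M / M ^ 2 := by rw [Real.rpow_neg_one]; field_simp
    _ ≤ K ^ 2 / M ^ 2 := by gcongr
    _ = (K / M) ^ 2 := (div_pow _ _ _).symm

theorem rpow_two_sub_le {c M m : ℝ} (hc : 0 ≤ c) (hM : 0 < M) (hMm : M ≤ m) (hm : m ≤ 2 * M) :
    m ^ (2 - c) ≤ 4 * M ^ (2 - c) := by
  have hm₀ : 0 < m := hM.trans_le hMm
  calc m ^ (2 - c) = m ^ 2 * m ^ (-c) := by rw [sub_eq_add_neg, Real.rpow_add hm₀, Real.rpow_two]
    _ ≤ (2 * M) ^ 2 * M ^ (-c) := by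
        gcongr ?_ ^ 2 * ?_
        exact Real.rpow_le_rpow_of_nonpos hM hMm (by linarith)
    _ = 4 * M ^ (2 - c) := by rw [sub_eq_add_neg, Real.rpow_add hM, Real.rpow_two]; ring

theorem exists_abs_sub_predictedSqDiff_le {c : ℝ} (hc : 1 < c) :
    ∃ C η : ℝ, 1 ≤ C ∧ 0 < η ∧ ∀ M K : ℝ, 1 ≤ M → M ≤ K ^ 2 → K ≤ η * M →
      ∀ x₁ ∈ Set.Icc M (M + K), ∀ x₂ ∈ Set.Icc M (M + K), ∀ x₃ ∈ Set.Icc M (M + K),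
      ∀ x₄ ∈ Set.Icc M (M + K), |x₁ ^ c + x₂ ^ c - x₃ ^ c - x₄ ^ c| ≤ 2 →
        |x₁ + x₂ - x₃ - x₄| ≤ C * (K ^ 2 / M) ∧
        |(x₁ - x₂) ^ 2 - (x₃ - x₄) ^ 2 - predictedSqDiff c (x₁ + x₂) (x₁ + x₂ - x₃ - x₄)|
          ≤ C * (K ^ 4 / M ^ 2 + M ^ (2 - c)) := by
  obtain ⟨C, q₀, hC, hq₀, h⟩ := exists_abs_sub_predictedSqDiff_le_of_centred hc
  refine ⟨4 * C, min q₀ 1, by linarith, by positivity, ?_⟩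
  rintro M K hM hMK hKM x₁ ⟨h₁, h₁'⟩ x₂ ⟨h₂, h₂'⟩ x₃ ⟨h₃, h₃'⟩ x₄ ⟨h₄, h₄'⟩ hS
  have hM₀ : 0 < M := one_pos.trans_le hM
  obtain ⟨m, hm⟩ : ∃ m, x₁ + x₂ = 2 * m := ⟨(x₁ + x₂) / 2, by ring⟩
  have hmM : M ≤ m := by linarith
  have hm₀ : 0 < m := hM₀.trans_le hmM
  have hq : K / M ≤ min q₀ 1 := (div_le_iff₀ hM₀).mpr hKM
  have hq₁ : K / M ≤ 1 := hq.trans (min_le_right _ _)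
  have hm₂ : m ≤ 2 * M := by linarith [(div_le_one hM₀).mp hq₁]
  have hlocal (x : ℝ) (hx : M ≤ x) (hx' : x ≤ M + K) : |x / m - 1| ≤ K / M := by
    rw [div_sub_one hm₀.ne', abs_div, abs_of_pos hm₀]
    gcongr
    · linarith
    · rw [abs_le]; constructor <;> linarith
  have hcoord (x : ℝ) : m * (1 + (x / m - 1)) = x := by field_simp; ring
  have hcoord₂ : m * (1 - (x₁ / m - 1)) = x₂ := by field_simp; linarith
  have hsum : x₁ + x₂ - x₃ - x₄ = -(m * (x₃ / m - 1 + (x₄ / m - 1))) := by field_simp; linarith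
  have hdiff : x₁ - x₂ = 2 * m * (x₁ / m - 1) := by field_simp; linarith
  have hdiff' : x₃ - x₄ = m * (x₃ / m - 1 - (x₄ / m - 1)) := by field_simp; ring
  have hmM' : m ^ (-c) ≤ M ^ (-c) := Real.rpow_le_rpow_of_nonpos hM₀ hmM (by linarith)
  obtain ⟨hℓ, hsq⟩ := h m _ _ _ _ hm₀ (hlocal x₁ h₁ h₁') (hlocal x₃ h₃ h₃') (hlocal x₄ h₄ h₄')
    (hq.trans (min_le_left _ _)) hq₁ (hmM'.trans (rpow_neg_le_sq_div hc.le hM hMK))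
    (by rwa [hcoord₂, hcoord, hcoord, hcoord])
  rw [hdiff, hdiff', hsum, hm, abs_neg]
  constructor
  · calc _ ≤ C * (2 * M * (K / M) ^ 2) := hℓ.trans (by gcongr)
      _ = 2 * C * (K ^ 2 / M) := by field_simp
      _ ≤ _ := by gcongr; linarith
  · calc _ ≤ C * ((2 * M) ^ 2 * (K / M) ^ 4 + 4 * M ^ (2 - c)) := by
          refine hsq.trans ?_
          gcongr
          exact rpow_two_sub_le (zero_le_one.trans hc.le) hM₀ hmM hm₂
      _ = _ := by field_simp; ring

/-- The additive quadruples of the values of `a` on `S`, the indexed analogue of the set counted by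
`Finset.addEnergy`. -/
def additiveQuadruples (a : ℕ → ℤ) (S : Finset ℕ) : Finset (ℕ × ℕ × ℕ × ℕ) :=
  (S ×ˢ S ×ˢ S ×ˢ S).filter fun q => a q.1 + a q.2.1 = a q.2.2.1 + a q.2.2.2

/-- The sum `n₁ + n₂` of the first pair of a quadruple. -/
def quadSum (q : ℕ × ℕ × ℕ × ℕ) : ℤ := q.1 + q.2.1

/-- The defect `n₁ + n₂ - n₃ - n₄` of a quadruple. -/
def quadDefect (q : ℕ × ℕ × ℕ × ℕ) : ℤ := q.1 + q.2.1 - q.2.2.1 - q.2.2.2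

/-- The difference `(n₁ - n₂) ^ 2 - (n₃ - n₄) ^ 2` attached to a quadruple. Together with the sum
and the defect it determines the quadruple up to a divisor of its value. -/
def quadSqDiff (q : ℕ × ℕ × ℕ × ℕ) : ℤ := ((q.1 : ℤ) - q.2.1) ^ 2 - ((q.2.2.1 : ℤ) - q.2.2.2) ^ 2

theorem mem_additiveQuadruples {a : ℕ → ℤ} {S : Finset ℕ} {n₁ n₂ n₃ n₄ : ℕ} :
    (n₁, n₂, n₃, n₄) ∈ additiveQuadruples a S ↔
      (n₁ ∈ S ∧ n₂ ∈ S ∧ n₃ ∈ S ∧ n₄ ∈ S) ∧ a n₁ + a n₂ = a n₃ + a n₄ := by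
  simp [additiveQuadruples]

theorem eq_and_eq_of_add_eq_add_of_strictMonoOn {a : ℕ → ℤ} {S : Set ℕ} (ha : StrictMonoOn a S)
    {x y z w : ℕ} (hx : x ∈ S) (hy : y ∈ S) (hz : z ∈ S) (hw : w ∈ S)
    (hadd : a x + a y = a z + a w) (hsub : (x : ℤ) - y = z - w) : x = z ∧ y = w := by
  rcases lt_trichotomy x z with h | h | h
  · have := ha hx hz h
    have := ha hy hw (by omega)
    omega
  · exact ⟨h, by omega⟩
  · have := ha hz hx h
    have := ha hw hy (by omega)
    omega

theorem card_additiveQuadruples_quadSqDiff_eq_zero_le {a : ℕ → ℤ} {S : Finset ℕ}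
    (ha : StrictMonoOn a S) :
    ((additiveQuadruples a S).filter fun q => quadSqDiff q = 0).card ≤ 2 * S.card ^ 2 := by
  have hsub : ((additiveQuadruples a S).filter fun q => quadSqDiff q = 0) ⊆
      (S ×ˢ S).image (fun p => (p.1, p.2, p.1, p.2)) ∪
        (S ×ˢ S).image (fun p => (p.1, p.2, p.2, p.1)) := by
    rintro ⟨n₁, n₂, n₃, n₄⟩ hq
    obtain ⟨hq, hsq⟩ := Finset.mem_filter.mp hq
    obtain ⟨⟨h₁, h₂, h₃, h₄⟩, hadd⟩ := mem_additiveQuadruples.mp hq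
    rw [Finset.mem_union, Finset.mem_image, Finset.mem_image]
    rcases sq_eq_sq_iff_eq_or_eq_neg.mp (sub_eq_zero.mp hsq) with h | h
    · obtain ⟨rfl, rfl⟩ := eq_and_eq_of_add_eq_add_of_strictMonoOn ha h₁ h₂ h₃ h₄ hadd h
      exact Or.inl ⟨(n₁, n₂), Finset.mk_mem_product h₁ h₂, rfl⟩
    · obtain ⟨rfl, rfl⟩ := eq_and_eq_of_add_eq_add_of_strictMonoOn ha h₁ h₂ h₄ h₃
        (hadd.trans (add_comm _ _)) (h.trans (neg_sub _ _))
      exact Or.inr ⟨(n₁, n₂), Finset.mk_mem_product h₁ h₂, rfl⟩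
  calc _ ≤ _ := (Finset.card_le_card hsub).trans (Finset.card_union_le _ _)
    _ ≤ (S ×ˢ S).card + (S ×ˢ S).card := by gcongr <;> exact Finset.card_image_le
    _ = _ := by rw [Finset.card_product]; ring

theorem card_le_two_mul_card_divisors {D : ℤ} (hD : D ≠ 0) {s : Finset ℤ} (hs : ∀ w ∈ s, w ∣ D) :
    s.card ≤ 2 * D.natAbs.divisors.card := by
  refine Finset.card_le_mul_card_image_of_maps_to (f := Int.natAbs) (fun w hw => ?_) 2
    fun b _ => ?_
  · exact Nat.mem_divisors.mpr ⟨Int.natAbs_dvd_natAbs.mpr (hs w hw), Int.natAbs_ne_zero.mpr hD⟩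
  · refine (Finset.card_le_card fun w hw => ?_).trans (Finset.card_le_two (a := (b : ℤ)) (b := -b))
    simpa [or_comm] using Int.natAbs_eq_iff.mp (Finset.mem_filter.mp hw).2

/-- The difference `(n₁ - n₂) - (n₃ - n₄)` is a divisor of `D`, and it determines the quadruple. -/
theorem card_le_of_quadSum_quadDefect_quadSqDiff_eq {T : Finset (ℕ × ℕ × ℕ × ℕ)} {s ℓ D : ℤ}
    (hD : D ≠ 0) (hT : ∀ q ∈ T, quadSum q = s ∧ quadDefect q = ℓ ∧ quadSqDiff q = D) :
    T.card ≤ 2 * D.natAbs.divisors.card := by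
  let w (q : ℕ × ℕ × ℕ × ℕ) : ℤ := ((q.1 : ℤ) - q.2.1) - ((q.2.2.1 : ℤ) - q.2.2.2)
  let w' (q : ℕ × ℕ × ℕ × ℕ) : ℤ := ((q.1 : ℤ) - q.2.1) + ((q.2.2.1 : ℤ) - q.2.2.2)
  have hfactor (q) (hq : q ∈ T) : D = w q * w' q := by
    rw [← (hT q hq).2.2, quadSqDiff]
    ring
  have hinj : Set.InjOn w T := by
    intro x hx y hy hxy
    have hw₀ : w x ≠ 0 := left_ne_zero_of_mul (hfactor x hx ▸ hD)
    have hw' : w' x = w' y := mul_left_cancel₀ hw₀ (by rw [← hfactor x hx, hxy, ← hfactor y hy])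
    obtain ⟨hxs, hxℓ, -⟩ := hT x hx
    obtain ⟨hys, hyℓ, -⟩ := hT y hy
    simp only [quadSum, quadDefect, w, w'] at hxs hxℓ hys hyℓ hxy hw'
    simp only [Prod.ext_iff]
    omega
  rw [← Finset.card_image_of_injOn hinj]
  refine card_le_two_mul_card_divisors hD fun v hv => ?_
  obtain ⟨q, hq, rfl⟩ := Finset.mem_image.mp hv
  exact ⟨_, hfactor q hq⟩

theorem card_le_of_abs_quadSqDiff_sub_le {T : Finset (ℕ × ℕ × ℕ × ℕ)} {P : Finset ℤ} {L X W : ℕ}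
    {Y : ℤ → ℤ → ℤ}
    (hT : ∀ q ∈ T, quadSum q ∈ P ∧ |quadDefect q| ≤ L ∧
      |quadSqDiff q - Y (quadSum q) (quadDefect q)| ≤ X)
    (hne : ∀ q ∈ T, quadSqDiff q ≠ 0)
    (hW : ∀ q ∈ T, (quadSqDiff q).natAbs.divisors.card ≤ W) :
    T.card ≤ 2 * W * (P.card * ((2 * L + 1) * (2 * X + 1))) := by
  have hcard (n : ℕ) : (Finset.Icc (-n : ℤ) n).card = 2 * n + 1 := by
    rw [Int.card_Icc]
    omega
  rw [← hcard, ← hcard, ← Finset.card_product, ← Finset.card_product]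
  refine Finset.card_le_mul_card_image_of_maps_to (f := fun q => (quadSum q, quadDefect q,
    quadSqDiff q - Y (quadSum q) (quadDefect q))) (fun q hq => ?_) _ ?_
  · simpa only [Finset.mem_product, Finset.mem_Icc, ← abs_le] using hT q hq
  rintro ⟨s, ℓ, d⟩ -
  rcases Finset.eq_empty_or_nonempty (T.filter fun q =>
    (quadSum q, quadDefect q, quadSqDiff q - Y (quadSum q) (quadDefect q)) = (s, ℓ, d))
    with h | ⟨q₀, hq₀⟩
  · rw [h, Finset.card_empty]
    exact Nat.zero_le _
  simp only [Finset.mem_filter, Prod.mk.injEq] at hq₀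
  refine (card_le_of_quadSum_quadDefect_quadSqDiff_eq (s := s) (ℓ := ℓ) (hne q₀ hq₀.1)
    fun q hq => ?_).trans (Nat.mul_le_mul_left 2 (hW q₀ hq₀.1))
  simp only [Finset.mem_filter, Prod.mk.injEq] at hq
  grind

theorem strictMonoOn_floor_rpow {c : ℝ} (hc : 1 ≤ c) :
    StrictMonoOn (fun n : ℕ => ⌊(n : ℝ) ^ c⌋) (Set.Ici 1) := by
  intro m hm n _ hmn
  have hm₁ : (1 : ℝ) ≤ m := mod_cast hm
  have hmn' : (m : ℝ) + 1 ≤ n := mod_cast hmn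
  have hpow (x : ℝ) (hx : 1 ≤ x) : x ^ c = x * x ^ (c - 1) := by
    rw [Real.rpow_sub_one (by positivity)]; field_simp
  have hadd : (m : ℝ) ^ c + 1 ≤ (n : ℝ) ^ c := calc
    (m : ℝ) ^ c + 1 ≤ m * (m : ℝ) ^ (c - 1) + (m : ℝ) ^ (c - 1) := by
      rw [hpow m hm₁]
      gcongr
      exact Real.one_le_rpow hm₁ (sub_nonneg.mpr hc)
    _ = (m + 1) * (m : ℝ) ^ (c - 1) := by ring
    _ ≤ n * (n : ℝ) ^ (c - 1) := by gcongr
    _ = (n : ℝ) ^ c := (hpow n (by linarith)).symm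
  have := Int.floor_le_floor hadd
  rw [Int.floor_add_one] at this
  exact Int.lt_of_add_one_le this

theorem quad_bounds_of_mem_Ioc {M K n₁ n₂ n₃ n₄ : ℕ} (h₁ : n₁ ∈ Finset.Ioc M (M + K))
    (h₂ : n₂ ∈ Finset.Ioc M (M + K)) (h₃ : n₃ ∈ Finset.Ioc M (M + K))
    (h₄ : n₄ ∈ Finset.Ioc M (M + K)) :
    quadSum (n₁, n₂, n₃, n₄) ∈ Finset.Ioc (2 * M : ℤ) (2 * M + 2 * K) ∧
      (quadSqDiff (n₁, n₂, n₃, n₄)).natAbs ≤ K ^ 2 := by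
  simp only [Finset.mem_Ioc] at h₁ h₂ h₃ h₄
  refine ⟨by simp only [quadSum, Finset.mem_Ioc]; omega, ?_⟩
  have hsq₁₂ : ((n₁ : ℤ) - n₂) ^ 2 ≤ (K : ℤ) ^ 2 := sq_le_sq' (by omega) (by omega)
  have hsq₃₄ : ((n₃ : ℤ) - n₄) ^ 2 ≤ (K : ℤ) ^ 2 := sq_le_sq' (by omega) (by omega)
  zify
  rw [abs_le, quadSqDiff]
  constructor <;> linarith [sq_nonneg ((n₁ : ℤ) - n₂), sq_nonneg ((n₃ : ℤ) - n₄)]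

section FloorRpow

variable {c : ℝ} {a : ℕ → ℤ}

theorem exists_abs_quadSqDiff_sub_le (hc : 1 < c) (ha : ∀ n : ℕ, 1 ≤ n → a n = ⌊(n : ℝ) ^ c⌋) :
    ∃ C η : ℝ, 1 ≤ C ∧ 0 < η ∧ ∀ M K : ℕ, 1 ≤ M → M ≤ K ^ 2 → (K : ℝ) ≤ η * M →
      ∀ q ∈ additiveQuadruples a (Finset.Ioc M (M + K)),
        (|quadDefect q| : ℝ) ≤ C * ((K : ℝ) ^ 2 / M) ∧
        |quadSqDiff q - predictedSqDiff c (quadSum q) (quadDefect q)|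
          ≤ C * ((K : ℝ) ^ 4 / M ^ 2 + (M : ℝ) ^ (2 - c)) := by
  obtain ⟨C, η, hC, hη, h⟩ := exists_abs_sub_predictedSqDiff_le hc
  refine ⟨C, η, hC, hη, ?_⟩
  rintro M K hM hMK hKM ⟨n₁, n₂, n₃, n₄⟩ hq
  obtain ⟨⟨h₁, h₂, h₃, h₄⟩, hadd⟩ := mem_additiveQuadruples.mp hq
  have hIcc (n : ℕ) (hn : n ∈ Finset.Ioc M (M + K)) : (n : ℝ) ∈ Set.Icc (M : ℝ) (M + K) := by
    rw [Finset.mem_Ioc] at hn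
    exact ⟨mod_cast hn.1.le, mod_cast hn.2⟩
  have hfloor (n : ℕ) (hn : n ∈ Finset.Ioc M (M + K)) :
      (a n : ℝ) ≤ (n : ℝ) ^ c ∧ (n : ℝ) ^ c < a n + 1 := by
    rw [ha n (hM.trans (Finset.mem_Ioc.mp hn).1.le)]
    exact ⟨Int.floor_le _, Int.lt_floor_add_one _⟩
  have hadd' : (a n₁ : ℝ) + a n₂ = a n₃ + a n₄ := mod_cast hadd
  have hpow : |(n₁ : ℝ) ^ c + (n₂ : ℝ) ^ c - (n₃ : ℝ) ^ c - (n₄ : ℝ) ^ c| ≤ 2 := by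
    have f₁ := hfloor _ h₁
    have f₂ := hfloor _ h₂
    have f₃ := hfloor _ h₃
    have f₄ := hfloor _ h₄
    rw [abs_le]
    constructor <;> linarith
  simpa only [quadSum, quadDefect, quadSqDiff, Int.cast_add, Int.cast_sub, Int.cast_pow,
    Int.cast_natCast] using h M K (mod_cast hM) (mod_cast hMK) hKM n₁ (hIcc _ h₁) n₂ (hIcc _ h₂) n₃
      (hIcc _ h₃) n₄ (hIcc _ h₄) hpow

theorem card_additiveQuadruples_quadSqDiff_ne_zero_le {M K W : ℕ} {Λ X : ℝ}
    (h : ∀ q ∈ additiveQuadruples a (Finset.Ioc M (M + K)), (|quadDefect q| : ℝ) ≤ Λ ∧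
      |quadSqDiff q - predictedSqDiff c (quadSum q) (quadDefect q)| ≤ X)
    (hW : ∀ n ≠ 0, n ≤ K ^ 2 → n.divisors.card ≤ W) :
    ((additiveQuadruples a (Finset.Ioc M (M + K))).filter fun q => ¬ quadSqDiff q = 0).card
      ≤ 2 * W * (2 * K * ((2 * ⌊Λ⌋₊ + 1) * (2 * ⌊X + 1⌋₊ + 1))) := by
  have hcard : (Finset.Ioc (2 * M : ℤ) (2 * M + 2 * K)).card = 2 * K := by
    rw [Int.card_Ioc]
    omega
  rw [← hcard]
  refine card_le_of_abs_quadSqDiff_sub_le (Y := fun s ℓ => ⌊predictedSqDiff c s ℓ⌋) ?_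
    (fun q hq => (Finset.mem_filter.mp hq).2) ?_
  all_goals
    rintro ⟨n₁, n₂, n₃, n₄⟩ hq
    obtain ⟨hq, hne⟩ := Finset.mem_filter.mp hq
    obtain ⟨⟨h₁, h₂, h₃, h₄⟩, -⟩ := mem_additiveQuadruples.mp hq
    obtain ⟨hsum, hsq⟩ := quad_bounds_of_mem_Ioc h₁ h₂ h₃ h₄
  · obtain ⟨hℓ, hX⟩ := h _ hq
    refine ⟨hsum, ?_, ?_⟩
    · rw [Int.abs_eq_natAbs, Nat.cast_le]
      exact Nat.le_floor (by rwa [Nat.cast_natAbs, Int.cast_abs])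
    · rw [Int.abs_eq_natAbs, Nat.cast_le]
      refine Nat.le_floor ?_
      rw [Nat.cast_natAbs, Int.cast_abs, Int.cast_sub]
      have hX' := abs_le.mp hX
      set y := predictedSqDiff c (quadSum (n₁, n₂, n₃, n₄)) (quadDefect (n₁, n₂, n₃, n₄))
      rw [abs_le]
      constructor <;> linarith [Int.floor_le y, Int.lt_floor_add_one y]
  · exact hW _ (Int.natAbs_ne_zero.mpr hne) hsq

theorem exists_card_additiveQuadruples_le (hc : 1 < c) (ha : ∀ n : ℕ, 1 ≤ n → a n = ⌊(n : ℝ) ^ c⌋)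
    {δ : ℝ} (hδ : 0 < δ) :
    ∃ C η : ℝ, 0 < η ∧ ∀ M K : ℕ, 1 ≤ M → M ≤ K ^ 2 → (K : ℝ) ≤ η * M →
      ((additiveQuadruples a (Finset.Ioc M (M + K))).card : ℝ) ≤ 2 * (K : ℝ) ^ 2 +
        C * (K * ((K : ℝ) ^ 2 / M) * ((K : ℝ) ^ 4 / (M : ℝ) ^ 2 + (M : ℝ) ^ (2 - c)) *
          ((K : ℝ) ^ 2) ^ δ) := by
  obtain ⟨C₁, η, hC₁, hη, hquad⟩ := exists_abs_quadSqDiff_sub_le hc ha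
  obtain ⟨C₂, hC₂, hdiv⟩ := exists_card_divisors_le hδ
  refine ⟨60 * C₁ ^ 2 * C₂, η, hη, fun M K hM hMK hKM => ?_⟩
  have hM₀ : (0 : ℝ) < M := mod_cast hM
  set W : ℝ := C₂ * ((K : ℝ) ^ 2) ^ δ
  set Λ : ℝ := C₁ * ((K : ℝ) ^ 2 / M)
  set X : ℝ := C₁ * ((K : ℝ) ^ 4 / (M : ℝ) ^ 2 + (M : ℝ) ^ (2 - c))
  have hΛ : 1 ≤ Λ :=
    one_le_mul_of_one_le_of_one_le hC₁ ((one_le_div hM₀).mpr (mod_cast hMK))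
  have hX : 1 ≤ X := by
    refine one_le_mul_of_one_le_of_one_le hC₁ (le_add_of_le_of_nonneg ?_ (by positivity))
    rw [one_le_div (by positivity)]
    exact_mod_cast (Nat.pow_le_pow_left hMK 2).trans_eq (by ring)
  have hdiv' (n : ℕ) (hn : n ≠ 0) (hnK : n ≤ K ^ 2) : n.divisors.card ≤ ⌊W⌋₊ :=
    Nat.le_floor ((hdiv n hn).trans (by unfold W; gcongr; exact_mod_cast hnK))
  have hdiag : ((additiveQuadruples a (Finset.Ioc M (M + K))).filter
      fun q => quadSqDiff q = 0).card ≤ 2 * K ^ 2 := by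
    refine (card_additiveQuadruples_quadSqDiff_eq_zero_le ?_).trans_eq (by simp)
    refine ((strictMonoOn_floor_rpow hc.le).congr fun n hn => (ha n hn).symm).mono fun n hn => ?_
    exact hM.trans (Finset.mem_Ioc.mp hn).1.le
  have hoff := card_additiveQuadruples_quadSqDiff_ne_zero_le (hquad M K hM hMK hKM) hdiv'
  rw [← Finset.card_filter_add_card_filter_not (fun q => quadSqDiff q = 0), Nat.cast_add]
  refine add_le_add (mod_cast hdiag) ((Nat.cast_le.mpr hoff).trans ?_)
  push_cast
  calc 2 * (⌊W⌋₊ : ℝ) * (2 * K * ((2 * ⌊Λ⌋₊ + 1) * (2 * ⌊X + 1⌋₊ + 1)))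
      ≤ 2 * W * (2 * K * ((2 * Λ + 1) * (2 * (X + 1) + 1))) := by
        gcongr <;> exact Nat.floor_le (by positivity)
    _ ≤ 2 * W * (2 * K * ((3 * Λ) * (5 * X))) := by gcongr <;> linarith
    _ = _ := by ring

/-- The main term of `exists_card_additiveQuadruples_le` for `M = x ^ 5` and `K = x ^ 3`; with this
ratio of exponents `2 * K ^ 2` and `K ^ 7 / M ^ 3` are both `x ^ 6` up to constants. -/
theorem energy_mainTerm_le_rpow {τ : ℝ} (hτ : τ ≤ (c - 1) / 2) (hτ' : τ ≤ 3 / 10) (δ : ℝ) {x : ℝ}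
    (hx : 1 ≤ x) :
    x ^ 3 * ((x ^ 3) ^ 2 / x ^ 5) * ((x ^ 3) ^ 4 / (x ^ 5) ^ 2 + (x ^ 5) ^ (2 - c)) *
      ((x ^ 3) ^ 2) ^ (δ / 6) ≤ 2 * x ^ (9 - 10 * τ + δ) := by
  have hx₀ : 0 < x := one_pos.trans_le hx
  have hquot : x ^ 3 * ((x ^ 3) ^ 2 / x ^ 5) = x ^ (4 : ℝ) := by
    rw [Real.rpow_ofNat]; field_simp
  have hquot' : (x ^ 3) ^ 4 / (x ^ 5) ^ 2 = x ^ (2 : ℝ) := by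
    rw [Real.rpow_ofNat]; field_simp
  have hpow : (x ^ 5) ^ (2 - c) = x ^ (5 * (2 - c)) := by
    rw [Real.rpow_mul hx₀.le, Real.rpow_ofNat]
  have hpowδ : ((x ^ 3) ^ 2) ^ (δ / 6) = x ^ δ := by
    rw [← pow_mul, ← Real.rpow_natCast, ← Real.rpow_mul hx₀.le]
    congr 1
    push_cast
    ring
  calc _ = x ^ (4 + 2 + δ) + x ^ (4 + 5 * (2 - c) + δ) := by
        rw [hquot, hquot', hpow, hpowδ, mul_add, add_mul]
        simp only [← Real.rpow_add hx₀]
    _ ≤ x ^ (9 - 10 * τ + δ) + x ^ (9 - 10 * τ + δ) := by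
        gcongr 2 <;> linarith
    _ = _ := (two_mul _).symm

theorem card_additiveQuadruples_isBigO (hc : 1 < c) (ha : ∀ n : ℕ, 1 ≤ n → a n = ⌊(n : ℝ) ^ c⌋)
    {τ : ℝ} (hτ : τ ≤ (c - 1) / 2) (hτ' : τ ≤ 3 / 10) {δ : ℝ} (hδ : 0 < δ) :
    (fun k : ℕ => ((additiveQuadruples a (Finset.Ioc (k ^ 5) (k ^ 5 + k ^ 3))).card : ℝ))
      =O[atTop] fun k : ℕ => (k : ℝ) ^ (9 - 10 * τ + δ) := by
  obtain ⟨C, η, hη, hE⟩ := exists_card_additiveQuadruples_le hc ha (by positivity : 0 < δ / 6)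
  refine IsBigO.of_bound (2 + |C| * 2) ?_
  filter_upwards [eventually_ge_atTop 1, tendsto_natCast_atTop_atTop.eventually_ge_atTop (1 / η)]
    with k hk hkη
  have hk₁ : (1 : ℝ) ≤ k := mod_cast hk
  have hshort : ((k ^ 3 : ℕ) : ℝ) ≤ η * (k ^ 5 : ℕ) := by
    push_cast
    calc (k : ℝ) ^ 3 ≤ k ^ 4 := pow_le_pow_right₀ hk₁ (by norm_num)
      _ ≤ (η * k) * k ^ 4 := le_mul_of_one_le_left (by positivity) ((div_le_iff₀' hη).mp hkη)
      _ = η * k ^ 5 := by ring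
  have h := hE (k ^ 5) (k ^ 3) (Nat.one_le_pow _ _ hk)
    (by rw [← pow_mul]; exact Nat.pow_le_pow_right hk (by norm_num)) hshort
  push_cast at h
  have hdiag : ((k : ℝ) ^ 3) ^ 2 ≤ (k : ℝ) ^ (9 - 10 * τ + δ) := by
    rw [← pow_mul, ← Real.rpow_natCast]
    exact Real.rpow_le_rpow_of_exponent_le hk₁ (by push_cast; linarith)
  rw [Real.norm_of_nonneg (Nat.cast_nonneg _), Real.norm_of_nonneg (by positivity)]
  calc _ ≤ 2 * (k : ℝ) ^ (9 - 10 * τ + δ) + |C| * (2 * (k : ℝ) ^ (9 - 10 * τ + δ)) := by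
        refine h.trans (add_le_add (by gcongr) ?_)
        exact mul_le_mul (le_abs_self C) (energy_mainTerm_le_rpow hτ hτ' δ hk₁) (by positivity)
          (abs_nonneg C)
    _ = _ := by ring

theorem floor_rpow_isBigO (ha : ∀ n : ℕ, 1 ≤ n → a n = ⌊(n : ℝ) ^ c⌋) :
    (fun n : ℕ => (a n : ℝ)) =O[atTop] fun n : ℕ => (n : ℝ) ^ c := by
  refine IsBigO.of_norm_eventuallyLE ?_
  filter_upwards [eventually_ge_atTop 1] with n hn
  have h₀ : 0 ≤ ⌊(n : ℝ) ^ c⌋ := Int.floor_nonneg.mpr (by positivity)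
  rw [ha n hn, Real.norm_of_nonneg (mod_cast h₀)]
  exact Int.floor_le _

end FloorRpow

section Fourier

open AddCircle

theorem integrable_haarAddCircle {E : Type*} [NormedAddCommGroup E] {f : UnitAddCircle → E}
    (hf : Continuous f) : Integrable f haarAddCircle :=
  hf.integrable_of_hasCompactSupport (.of_compactSpace f)

theorem hasSum_sq_fourierCoeff_of_continuous {f : UnitAddCircle → ℂ} (hf : Continuous f) :
    HasSum (fun n => ‖fourierCoeff f n‖ ^ 2) (∫ x, ‖f x‖ ^ 2 ∂haarAddCircle) := by
  have hmem : MemLp f 2 (haarAddCircle (T := (1 : ℝ))) :=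
    hf.memLp_of_hasCompactSupport (.of_compactSpace f)
  have h := hasSum_sq_fourierCoeff hmem.toLp
  rw [fourierCoeff_congr_ae hmem.coeFn_toLp] at h
  convert h using 1
  refine integral_congr_ae ?_
  filter_upwards [hmem.coeFn_toLp] with x hx
  rw [hx]

theorem measurePreserving_nsmul_haarAddCircle {h : ℕ} (hh : h ≠ 0) :
    MeasurePreserving (fun x : UnitAddCircle => h • x) haarAddCircle haarAddCircle := by
  simpa only [natCast_zsmul] using
    haarAddCircle.measurePreserving_zsmul (G := UnitAddCircle) (n := h) (mod_cast hh)

theorem continuous_comp_nsmul {E : Type*} [TopologicalSpace E] {f : UnitAddCircle → E}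
    (hf : Continuous f) (h : ℕ) : Continuous fun x => f (h • x) :=
  hf.comp (continuous_nsmul h)

theorem integral_comp_nsmul_haarAddCircle {E : Type*} [NormedAddCommGroup E] [NormedSpace ℝ E]
    {f : UnitAddCircle → E} (hf : Continuous f) {h : ℕ} (hh : h ≠ 0) :
    ∫ x, f (h • x) ∂haarAddCircle = ∫ x, f x ∂haarAddCircle := by
  have hmp := measurePreserving_nsmul_haarAddCircle hh
  conv_rhs => rw [← hmp.map_eq]
  exact (integral_map hmp.aemeasurable hf.aestronglyMeasurable).symm

theorem fourierCoeff_comp_nsmul_mul {f : UnitAddCircle → ℂ} (hf : Continuous f) {h : ℕ}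
    (hh : h ≠ 0) (m : ℤ) :
    fourierCoeff (fun x => f (h • x)) (h * m) = fourierCoeff f m := by
  unfold fourierCoeff
  rw [← integral_comp_nsmul_haarAddCircle (f := fun x => fourier (-m) x • f x) (by fun_prop) hh]
  refine integral_congr_ae (ae_of_all _ fun x => ?_)
  simp only [fourier_apply]
  rw [← natCast_zsmul, ← mul_zsmul]
  ring_nf

theorem fourierCoeff_comp_add_right {E : Type*} [NormedAddCommGroup E] [NormedSpace ℂ E]
    (f : UnitAddCircle → E) (s : UnitAddCircle) (n : ℤ) :
    fourierCoeff (fun x => f (x + s)) n = (fourier n s : ℂ) • fourierCoeff f n := by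
  unfold fourierCoeff
  rw [← integral_smul, ← integral_add_right_eq_self (fun x => fourier n s • fourier (-n) x • f x) s]
  refine integral_congr_ae (ae_of_all _ fun x => ?_)
  simp only [fourier_apply, smul_smul, ← Circle.coe_mul, ← toCircle_add]
  congr 4
  rw [smul_add]
  module

theorem fourier_one_div_eq_one_iff {h : ℕ} (hh : h ≠ 0) {n : ℤ} :
    fourier n ((1 / h : ℝ) : UnitAddCircle) = 1 ↔ (h : ℤ) ∣ n := by
  rw [fourier_apply, Circle.coe_eq_one, ← toCircle_zero,
    (injective_toCircle one_ne_zero).eq_iff, ← coe_zsmul, coe_eq_zero_iff]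
  refine exists_congr fun k => ?_
  rw [zsmul_eq_mul, zsmul_eq_mul, mul_one, mul_one_div, eq_div_iff (mod_cast hh), eq_comm, mul_comm]
  norm_cast

theorem fourierCoeff_comp_nsmul_of_not_dvd (f : UnitAddCircle → ℂ) {h : ℕ} (hh : h ≠ 0) {n : ℤ}
    (hn : ¬ (h : ℤ) ∣ n) : fourierCoeff (fun x => f (h • x)) n = 0 := by
  have hperiod : h • ((1 / h : ℝ) : UnitAddCircle) = 0 := by
    rw [← coe_nsmul, nsmul_eq_mul, mul_one_div_cancel (mod_cast hh)]
    exact coe_period 1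
  have hinv := fourierCoeff_comp_add_right (fun x => f (h • x)) ((1 / h : ℝ) : UnitAddCircle) n
  simp only [nsmul_add, hperiod, add_zero] at hinv
  by_contra hne
  exact hn ((fourier_one_div_eq_one_iff hh).mp ((mul_eq_right₀ hne).mp hinv.symm))

theorem norm_fourierCoeff_le_of_lipschitzWith {V : ℝ≥0} {f : UnitAddCircle → ℂ}
    (hf : LipschitzWith V f) {n : ℤ} (hn : n ≠ 0) :
    ‖fourierCoeff f n‖ ≤ V / (4 * |(n : ℝ)|) := by
  obtain ⟨s, hs⟩ : ∃ s : ℝ, s = 1 / 2 / n := ⟨_, rfl⟩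
  have hflip : fourierCoeff (fun x : UnitAddCircle => f (x + s)) n = -fourierCoeff f n := by
    have hneg := fourier_add_half_inv_index hn one_pos (0 : UnitAddCircle)
    rw [zero_add, fourier_eval_zero, ← hs] at hneg
    rw [fourierCoeff_comp_add_right, hneg, neg_one_smul]
  have hdiff : 2 * fourierCoeff f n = ∫ x, fourier (-n) x • (f x - f (x + s)) ∂haarAddCircle := by
    have hf' := hf.continuous
    simp_rw [smul_sub]
    rw [integral_sub (integrable_haarAddCircle (by fun_prop))
      (integrable_haarAddCircle (by fun_prop))]
    change _ = fourierCoeff f n - fourierCoeff (fun x : UnitAddCircle => f (x + s)) n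
    rw [hflip]
    ring
  have hbound : ‖2 * fourierCoeff f n‖ ≤ V * |s| := by
    rw [hdiff]
    refine (norm_integral_le_of_norm_le_const (C := V * |s|) (ae_of_all _ fun x => ?_)).trans_eq
      (by rw [probReal_univ, mul_one])
    rw [norm_smul, fourier_apply, Circle.norm_coe, one_mul]
    refine (hf.norm_sub_le _ _).trans ?_
    rw [sub_add_cancel_left, norm_neg]
    gcongr
    exact QuotientAddGroup.norm_mk_le_norm
  rw [norm_mul, Complex.norm_ofNat, hs, abs_div, abs_of_pos one_half_pos] at hbound
  calc ‖fourierCoeff f n‖ = 2 * ‖fourierCoeff f n‖ / 2 := by ring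
    _ ≤ V * (1 / 2 / |(n : ℝ)|) / 2 := by gcongr
    _ = V / (4 * |(n : ℝ)|) := by ring

end Fourier

section Dilates

open AddCircle ProbabilityTheory

theorem norm_sum_sq_le_card_mul {ι E : Type*} [SeminormedAddCommGroup E]
    {s t : Finset ι} {f : ι → E} (hf : ∀ i ∈ s, i ∉ t → f i = 0) :
    ‖∑ i ∈ s, f i‖ ^ 2 ≤ t.card * ∑ i ∈ s, ‖f i‖ ^ 2 := by
  classical
  have hinter : ∑ i ∈ s ∩ t, f i = ∑ i ∈ s, f i :=
    Finset.sum_subset Finset.inter_subset_left fun i hi hit =>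
      hf i hi fun h => hit (Finset.mem_inter.mpr ⟨hi, h⟩)
  calc ‖∑ i ∈ s, f i‖ ^ 2 ≤ (∑ i ∈ s ∩ t, ‖f i‖) ^ 2 := by
        rw [← hinter]; gcongr; exact norm_sum_le _ _
    _ ≤ (s ∩ t).card * ∑ i ∈ s ∩ t, ‖f i‖ ^ 2 := sq_sum_le_card_mul_sum_sq
    _ ≤ t.card * ∑ i ∈ s, ‖f i‖ ^ 2 := by
        gcongr <;> simp

theorem integral_norm_sq_sum_comp_nsmul_le {s : Finset ℕ} (hs : 0 ∉ s)
    {f : ℕ → UnitAddCircle → ℂ} (hf : ∀ h ∈ s, Continuous (f h))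
    (hf₀ : ∀ h ∈ s, ∫ x, f h x ∂haarAddCircle = 0) {w : ℕ → ℤ → ℝ} {S : ℕ → ℝ}
    (hw : ∀ h ∈ s, HasSum (w h) (S h))
    (hfw : ∀ h ∈ s, ∀ m : ℤ,
      (h * m).natAbs.divisors.card * ‖fourierCoeff (f h) m‖ ^ 2 ≤ w h m) :
    ∫ x, ‖∑ h ∈ s, f h (h • x)‖ ^ 2 ∂haarAddCircle ≤ ∑ h ∈ s, S h := by
  have hne (h : ℕ) (hh : h ∈ s) : h ≠ 0 := ne_of_mem_of_not_mem hh hs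
  have hinj (h : ℕ) (hh : h ∈ s) : Function.Injective fun m : ℤ => (h : ℤ) * m :=
    mul_right_injective₀ (mod_cast hne h hh)
  have hdil (h : ℕ) (hh : h ∈ s) := continuous_comp_nsmul (hf h hh) h
  have hcoeff (n : ℤ) : fourierCoeff (fun x => ∑ h ∈ s, f h (h • x)) n
      = ∑ h ∈ s, fourierCoeff (fun x => f h (h • x)) n := by
    rw [← Finset.sum_apply, ← fourierCoeff.sum _ _ fun h hh => integrable_haarAddCircle (hdil h hh)]
    congr 1
    ext x
    simp only [Finset.sum_apply]
  refine hasSum_le (fun n => ?_)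
    (hasSum_sq_fourierCoeff_of_continuous (continuous_finsetSum s hdil))
    (hasSum_sum fun h hh => (hasSum_extend_zero (hinj h hh)).mpr (hw h hh))
  rw [hcoeff]
  refine (norm_sum_sq_le_card_mul (t := n.natAbs.divisors) fun h hh hhn => ?_).trans ?_
  · by_cases hdvd : (h : ℤ) ∣ n
    · obtain rfl : n = 0 := by
        by_contra hn
        exact hhn (Nat.mem_divisors.mpr ⟨Int.natCast_dvd.mp hdvd, Int.natAbs_ne_zero.mpr hn⟩)
      rw [← mul_zero (h : ℤ), fourierCoeff_comp_nsmul_mul (hf h hh) (hne h hh)]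
      simpa [fourierCoeff] using hf₀ h hh
    · exact fourierCoeff_comp_nsmul_of_not_dvd (f h) (hne h hh) hdvd
  rw [Finset.mul_sum]
  refine Finset.sum_le_sum fun h hh => ?_
  by_cases hdvd : (h : ℤ) ∣ n
  · obtain ⟨m, rfl⟩ := hdvd
    rw [fourierCoeff_comp_nsmul_mul (hf h hh) (hne h hh), (hinj h hh).extend_apply (w h) 0 m]
    exact hfw h hh m
  · rw [fourierCoeff_comp_nsmul_of_not_dvd (f h) (hne h hh) hdvd, Function.extend_apply']
    · simp
    · rintro ⟨m, rfl⟩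
      exact hdvd (dvd_mul_right _ _)

theorem rpow_mul_sq_le_add {δ A V T x : ℝ} (hδ : 0 ≤ δ) (hδ' : δ ≤ 1 / 4) (hA : 0 ≤ A)
    (hT : 1 ≤ T) (hx : 1 ≤ x) (hAx : A ≤ V / x) :
    x ^ δ * A ^ 2 ≤ T ^ (4 * δ) * A ^ 2 + (V / T) ^ 2 * x ^ (-(5 / 4) : ℝ) := by
  have hT₀ : 0 < T := one_pos.trans_le hT
  have hx₀ : 0 < x := one_pos.trans_le hx
  rw [Real.rpow_mul hT₀.le, Real.rpow_ofNat]
  rcases le_total x (T ^ 4) with hxT | hTx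
  · exact le_add_of_le_of_nonneg (by gcongr) (by positivity)
  · refine le_add_of_nonneg_of_le (by positivity) ?_
    have hT₂ : T ^ 2 ≤ x ^ (1 / 2 : ℝ) := by
      rw [← Real.sqrt_eq_rpow]
      exact Real.le_sqrt_of_sq_le (hTx.trans_eq' (by ring))
    calc x ^ δ * A ^ 2 ≤ x ^ (1 / 4 : ℝ) * (V / x) ^ 2 := by gcongr
      _ = V ^ 2 / x ^ (1 / 2 : ℝ) * x ^ (-(5 / 4) : ℝ) := by
        rw [div_pow, div_mul_eq_mul_div, mul_div_left_comm, mul_div_assoc, ← Real.rpow_ofNat x 2,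
          ← Real.rpow_sub hx₀, ← Real.rpow_sub hx₀]
        norm_num
      _ ≤ V ^ 2 / T ^ 2 * x ^ (-(5 / 4) : ℝ) := by gcongr
      _ = (V / T) ^ 2 * x ^ (-(5 / 4) : ℝ) := by rw [div_pow]

theorem card_divisors_mul_sq_fourierCoeff_le {C δ : ℝ} (hC : 0 ≤ C) (hδ : 0 ≤ δ) (hδ' : δ ≤ 1 / 4)
    (hdiv : ∀ n : ℕ, n ≠ 0 → (n.divisors.card : ℝ) ≤ C * (n : ℝ) ^ δ) {V : ℝ≥0}
    {f : UnitAddCircle → ℂ} (hf : LipschitzWith V f) {h L : ℕ} (hh : h ≠ 0) (hhL : h ≤ L) {T : ℝ}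
    (hT : 1 ≤ T) (m : ℤ) :
    (h * m).natAbs.divisors.card * ‖fourierCoeff f m‖ ^ 2 ≤ C * (L : ℝ) ^ δ *
      (T ^ (4 * δ) * ‖fourierCoeff f m‖ ^ 2 + (V / T) ^ 2 * |(m : ℝ)| ^ (-(5 / 4) : ℝ)) := by
  rcases eq_or_ne m 0 with rfl | hm
  · rw [mul_zero, Int.natAbs_zero, Nat.divisors_zero, Finset.card_empty, Nat.cast_zero, zero_mul]
    positivity
  have hm₁ : 1 ≤ |(m : ℝ)| := mod_cast Int.one_le_abs hm
  have hcoeff : ‖fourierCoeff f m‖ ≤ V / |(m : ℝ)| :=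
    (norm_fourierCoeff_le_of_lipschitzWith hf hm).trans (by gcongr; linarith)
  have hcard : ((h * m).natAbs.divisors.card : ℝ) ≤ C * ((L : ℝ) ^ δ * |(m : ℝ)| ^ δ) := by
    refine (hdiv _ (by simp [hh, hm])).trans ?_
    rw [Int.natAbs_mul, Int.natAbs_natCast, Nat.cast_mul, Nat.cast_natAbs, Int.cast_abs,
      ← Real.mul_rpow (by positivity) (by positivity)]
    gcongr
  calc _ ≤ C * ((L : ℝ) ^ δ * |(m : ℝ)| ^ δ) * ‖fourierCoeff f m‖ ^ 2 := by gcongr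
    _ = C * (L : ℝ) ^ δ * (|(m : ℝ)| ^ δ * ‖fourierCoeff f m‖ ^ 2) := by ring
    _ ≤ _ := by gcongr; exact rpow_mul_sq_le_add hδ hδ' (norm_nonneg _) hT hm₁ hcoeff

theorem integral_norm_sq_sum_comp_nsmul_le_of_lipschitzWith {C δ : ℝ} (hC : 0 ≤ C) (hδ : 0 ≤ δ)
    (hδ' : δ ≤ 1 / 4) (hdiv : ∀ n : ℕ, n ≠ 0 → (n.divisors.card : ℝ) ≤ C * (n : ℝ) ^ δ) {V : ℝ≥0}
    {f : ℕ → UnitAddCircle → ℂ} (hf : ∀ h, LipschitzWith V (f h))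
    (hf₀ : ∀ h, ∫ x, f h x ∂haarAddCircle = 0) (L : ℕ) {T : ℝ} (hT : 1 ≤ T) :
    ∫ x, ‖∑ h ∈ Finset.Icc 1 L, f h (h • x)‖ ^ 2 ∂haarAddCircle ≤ C * (L : ℝ) ^ δ *
      (T ^ (4 * δ) * ∑ h ∈ Finset.Icc 1 L, ∫ x, ‖f h x‖ ^ 2 ∂haarAddCircle +
        L * ((V / T) ^ 2 * ∑' m : ℤ, |(m : ℝ)| ^ (-(5 / 4) : ℝ))) := by
  have hZ := Real.summable_abs_int_rpow (by norm_num : (1 : ℝ) < 5 / 4)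
  refine (integral_norm_sq_sum_comp_nsmul_le (by simp) (fun h _ => (hf h).continuous)
    (fun h _ => hf₀ h)
    (fun h _ => (((hasSum_sq_fourierCoeff_of_continuous (hf h).continuous).mul_left _).add
      (hZ.hasSum.mul_left _)).mul_left _)
    fun h hh m => card_divisors_mul_sq_fourierCoeff_le hC hδ hδ' hdiv (hf h)
      (Nat.one_le_iff_ne_zero.mp (Finset.mem_Icc.mp hh).1) (Finset.mem_Icc.mp hh).2
      hT m).trans_eq ?_
  rw [← Finset.mul_sum, Finset.sum_add_distrib, ← Finset.mul_sum, Finset.sum_const,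
    Nat.card_Icc, nsmul_eq_mul, Nat.add_sub_cancel]

theorem exists_integral_norm_sq_sum_comp_nsmul_le {θ : ℝ} (hθ : 0 < θ) :
    ∃ C : ℝ, 0 ≤ C ∧ ∀ (L : ℕ) (V : ℝ≥0), 1 ≤ L → 1 ≤ V → ∀ f : ℕ → UnitAddCircle → ℂ,
      (∀ h, LipschitzWith V (f h)) → (∀ h, ∫ x, f h x ∂haarAddCircle = 0) →
      ∫ x, ‖∑ h ∈ Finset.Icc 1 L, f h (h • x)‖ ^ 2 ∂haarAddCircle
        ≤ C * (V * L) ^ θ * (∑ h ∈ Finset.Icc 1 L, ∫ x, ‖f h x‖ ^ 2 ∂haarAddCircle + 1) := by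
  obtain ⟨δ, hδ, hδ', hδθ⟩ : ∃ δ : ℝ, 0 < δ ∧ δ ≤ 1 / 4 ∧ 5 * δ ≤ θ :=
    ⟨min (1 / 4) (θ / 5), by positivity, min_le_left _ _, by
      linarith [min_le_right (1 / 4) (θ / 5)]⟩
  obtain ⟨C, hC, hdiv⟩ := exists_card_divisors_le hδ
  set Z : ℝ := ∑' m : ℤ, |(m : ℝ)| ^ (-(5 / 4) : ℝ)
  have hZ₀ : 0 ≤ Z := tsum_nonneg fun m => by positivity
  refine ⟨C * (1 + Z), by positivity, fun L V hL hV f hf hf₀ => ?_⟩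
  have hV₁ : (1 : ℝ) ≤ V := mod_cast hV
  have hL₁ : (1 : ℝ) ≤ L := mod_cast hL
  obtain ⟨T, hT⟩ : ∃ T : ℝ, T = V * L := ⟨_, rfl⟩
  have hT₁ : 1 ≤ T := hT ▸ one_le_mul_of_one_le_of_one_le hV₁ hL₁
  have hLT : (L : ℝ) ≤ T := hT ▸ le_mul_of_one_le_left (by positivity) hV₁
  have hVT : (V / T : ℝ) = 1 / L := by rw [hT]; field_simp
  set Q : ℝ := ∑ h ∈ Finset.Icc 1 L, ∫ x, ‖f h x‖ ^ 2 ∂haarAddCircle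
  have hQ : 0 ≤ Q := Finset.sum_nonneg fun h _ => integral_nonneg fun x => by positivity
  rw [← hT]
  calc _ ≤ C * (L : ℝ) ^ δ * (T ^ (4 * δ) * Q + L * ((V / T) ^ 2 * Z)) :=
        integral_norm_sq_sum_comp_nsmul_le_of_lipschitzWith (by positivity) hδ.le hδ' hdiv hf hf₀ L
          hT₁
    _ = C * (L : ℝ) ^ δ * (T ^ (4 * δ) * Q + Z / L) := by rw [hVT]; field_simp
    _ ≤ C * T ^ δ * (T ^ (4 * δ) * Q + T ^ (4 * δ) * Z) := by
        gcongr
        exact (div_le_self hZ₀ hL₁).trans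
          (le_mul_of_one_le_left hZ₀ (Real.one_le_rpow hT₁ (by positivity)))
    _ = C * T ^ (5 * δ) * (Q + Z) := by
        rw [show 5 * δ = δ + 4 * δ by ring, Real.rpow_add (one_pos.trans_le hT₁)]
        ring
    _ ≤ C * T ^ θ * ((1 + Z) * (Q + 1)) := by
        gcongr
        linarith [mul_nonneg hZ₀ hQ]
    _ = C * (1 + Z) * T ^ θ * (Q + 1) := by ring

theorem integral_sum_comp_nsmul {L : ℕ} {f : ℕ → UnitAddCircle → ℝ} (hf : ∀ h, Continuous (f h)) :
    ∫ x, ∑ h ∈ Finset.Icc 1 L, f h (h • x) ∂haarAddCircle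
      = ∑ h ∈ Finset.Icc 1 L, ∫ x, f h x ∂haarAddCircle := by
  rw [integral_finsetSum _ fun h _ =>
    integrable_haarAddCircle (continuous_comp_nsmul (hf h) h)]
  exact Finset.sum_congr rfl fun h hh => integral_comp_nsmul_haarAddCircle (hf h)
    (Nat.one_le_iff_ne_zero.mp (Finset.mem_Icc.mp hh).1)

theorem variance_eq_integral_norm_sq {f : UnitAddCircle → ℝ} (hf : Continuous f) :
    Var[f; haarAddCircle] = ∫ x, ‖((f x - haarAddCircle[f] : ℝ) : ℂ)‖ ^ 2 ∂haarAddCircle := by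
  simp_rw [variance_eq_integral hf.aemeasurable, Complex.norm_real, Real.norm_eq_abs, sq_abs]

theorem exists_variance_sum_comp_nsmul_le {θ : ℝ} (hθ : 0 < θ) :
    ∃ C : ℝ, 0 ≤ C ∧ ∀ (L : ℕ) (V : ℝ≥0), 1 ≤ L → 1 ≤ V → ∀ f : ℕ → UnitAddCircle → ℝ,
      (∀ h, LipschitzWith V (f h)) →
      Var[fun x => ∑ h ∈ Finset.Icc 1 L, f h (h • x); haarAddCircle]
        ≤ C * (V * L) ^ θ * (∑ h ∈ Finset.Icc 1 L, Var[f h; haarAddCircle] + 1) := by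
  obtain ⟨C, hC, hbound⟩ := exists_integral_norm_sq_sum_comp_nsmul_le hθ
  refine ⟨C, hC, fun L V hL hV f hf => ?_⟩
  rw [variance_eq_integral_norm_sq
    (continuous_finsetSum _ fun h _ => continuous_comp_nsmul (hf h).continuous h),
    integral_sum_comp_nsmul fun h => (hf h).continuous]
  simp_rw [fun h => variance_eq_integral_norm_sq (hf h).continuous]
  convert hbound L V hL hV (fun h x => ((f h x - haarAddCircle[f h] : ℝ) : ℂ)) (fun h => ?_)
    (fun h => ?_) using 5
  · rw [← Complex.ofReal_sum, Finset.sum_sub_distrib]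
  · refine LipschitzWith.of_dist_le_mul fun x y => ?_
    rw [Complex.isometry_ofReal.dist_eq, dist_sub_right]
    exact (hf h).dist_le_mul x y
  · rw [integral_complex_ofReal, integral_sub (integrable_haarAddCircle (hf h).continuous)
      (integrable_const _), integral_const, probReal_univ, one_smul, sub_self, Complex.ofReal_zero]

theorem variance_le_integral_of_mem_Icc {f : UnitAddCircle → ℝ} (hf : Continuous f)
    (hf₀₁ : ∀ x, f x ∈ Set.Icc 0 1) : Var[f; haarAddCircle] ≤ haarAddCircle[f] := by
  refine (variance_le_expectation_sq hf.aestronglyMeasurable).trans ?_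
  refine integral_mono (integrable_haarAddCircle (hf.pow 2)) (integrable_haarAddCircle hf)
    fun x => pow_le_of_le_one (hf₀₁ x).1 (hf₀₁ x).2 two_ne_zero

theorem exists_measureReal_sum_comp_nsmul_eq_zero_le {θ : ℝ} (hθ : 0 < θ) :
    ∃ C : ℝ, 0 ≤ C ∧ ∀ (L : ℕ) (V : ℝ≥0), 1 ≤ V → ∀ f : ℕ → UnitAddCircle → ℝ,
      (∀ h, LipschitzWith V (f h)) → (∀ h x, f h x ∈ Set.Icc 0 1) →
      1 ≤ ∑ h ∈ Finset.Icc 1 L, haarAddCircle[f h] →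
      haarAddCircle.real {x : UnitAddCircle | ∑ h ∈ Finset.Icc 1 L, f h (h • x) = 0}
        ≤ C * (V * L) ^ θ / ∑ h ∈ Finset.Icc 1 L, haarAddCircle[f h] := by
  obtain ⟨C, hC, hvar⟩ := exists_variance_sum_comp_nsmul_le hθ
  refine ⟨2 * C, by positivity, fun L V hV f hf hf₀₁ hμ => ?_⟩
  have hL : 1 ≤ L := by
    by_contra! hL
    obtain rfl := Nat.lt_one_iff.mp hL
    norm_num at hμ
  obtain ⟨μ, hμ_def⟩ : ∃ μ, μ = ∑ h ∈ Finset.Icc 1 L, haarAddCircle[f h] := ⟨_, rfl⟩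
  rw [← hμ_def] at hμ ⊢
  let X : UnitAddCircle → ℝ := fun x => ∑ h ∈ Finset.Icc 1 L, f h (h • x)
  have hX : Continuous X :=
    continuous_finsetSum _ fun h _ => continuous_comp_nsmul (hf h).continuous h
  have hmean : haarAddCircle[X] = μ :=
    hμ_def ▸ integral_sum_comp_nsmul fun h => (hf h).continuous
  have hVar : Var[X; haarAddCircle] ≤ C * (V * L) ^ θ * (2 * μ) := by
    refine (hvar L V hL hV f hf).trans ?_
    gcongr
    calc _ ≤ μ + 1 := by
          rw [hμ_def]
          gcongr with h
          exact variance_le_integral_of_mem_Icc (hf h).continuous (hf₀₁ h)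
      _ ≤ 2 * μ := by linarith
  have hcheb := meas_ge_le_variance_div_sq
    (hX.memLp_of_hasCompactSupport (μ := haarAddCircle) (p := 2) (.of_compactSpace X))
    (one_pos.trans_le hμ)
  rw [hmean] at hcheb
  calc haarAddCircle.real {x | X x = 0} ≤ haarAddCircle.real {x | μ ≤ |X x - μ|} := by
        refine measureReal_mono fun x hx => ?_
        rw [Set.mem_ofPred_eq, show X x = 0 from hx, zero_sub, abs_neg]
        exact le_abs_self μ
    _ ≤ Var[X; haarAddCircle] / μ ^ 2 :=
        ENNReal.toReal_le_of_le_ofReal (div_nonneg (variance_nonneg _ _) (sq_nonneg _)) hcheb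
    _ ≤ C * (V * L) ^ θ * (2 * μ) / μ ^ 2 := by gcongr
    _ = 2 * C * (V * L) ^ θ / μ := by field_simp

/-- The piecewise linear function equal to `0` on `(-∞, 1]` and to `1` on `[2, ∞)`: a Lipschitz
substitute for the indicator of `(1, ∞)`. -/
noncomputable def ramp (t : ℝ) : ℝ := max 0 (min 1 (t - 1))

theorem ramp_mem_Icc (t : ℝ) : ramp t ∈ Set.Icc 0 1 :=
  ⟨le_max_left _ _, max_le zero_le_one (min_le_left _ _)⟩

theorem lipschitzWith_ramp : LipschitzWith 1 ramp :=
  ((IsometryEquiv.subRight (1 : ℝ)).isometry.lipschitz.const_min 1).const_max 0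

theorem ramp_of_le_one {t : ℝ} (ht : t ≤ 1) : ramp t = 0 :=
  max_eq_left ((min_le_right _ _).trans (by linarith))

theorem ramp_of_two_le {t : ℝ} (ht : 2 ≤ t) : ramp t = 1 := by
  rw [ramp, min_eq_left (by linarith), max_eq_right zero_le_one]

theorem half_sub_one_le_sum_ramp {K : ℕ} {t : ℝ} (ht : t / 2 ≤ K) :
    t / 2 - 1 ≤ ∑ h ∈ Finset.Icc 1 K, ramp (t / h) := by
  calc t / 2 - 1 ≤ (⌊t / 2⌋₊ : ℝ) := by linarith [Nat.lt_floor_add_one (t / 2)]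
    _ = ∑ h ∈ Finset.Icc 1 ⌊t / 2⌋₊, ramp (t / h) := by
        rw [Finset.sum_congr rfl fun h hh => ramp_of_two_le ?_, Finset.sum_const, Nat.card_Icc,
          nsmul_one, Nat.add_sub_cancel]
        obtain ⟨h₁, h₂⟩ := Finset.mem_Icc.mp hh
        have := (Nat.le_floor_iff' (Nat.one_le_iff_ne_zero.mp h₁)).mp h₂
        rw [le_div_iff₀ (mod_cast h₁)]
        linarith
    _ ≤ ∑ h ∈ Finset.Icc 1 K, ramp (t / h) :=
        Finset.sum_le_sum_of_subset_of_nonneg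
          (Finset.Icc_subset_Icc_right (Nat.floor_le_of_le ht)) fun h _ _ => (ramp_mem_Icc _).1

theorem lipschitzWith_ramp_div {X : Type*} [PseudoMetricSpace X] {V : ℝ≥0} {f : X → ℝ}
    (hf : LipschitzWith V f) {D : ℝ} (hD : 1 ≤ D) (h : ℕ) :
    LipschitzWith V fun x => ramp (f x / D / h) := by
  rcases Nat.eq_zero_or_pos h with rfl | hh
  · simp only [Nat.cast_zero, div_zero]
    exact LipschitzWith.const' _
  rw [← one_mul V]
  refine lipschitzWith_ramp.comp (LipschitzWith.of_dist_le_mul fun x y => ?_)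
  have hhD : 1 ≤ D * h := one_le_mul_of_one_le_of_one_le hD (mod_cast hh)
  rw [div_div, div_div, Real.dist_eq, ← sub_div, abs_div, abs_of_pos (one_pos.trans_le hhD)]
  exact (div_le_self (abs_nonneg _) hhD).trans (hf.dist_le_mul x y)

theorem integral_div_le_sum_integral_ramp {V : ℝ≥0} {f : UnitAddCircle → ℝ}
    (hf : LipschitzWith V f) {K : ℕ} (hfK : ∀ x, f x ≤ K) {D : ℝ} (hD : 1 ≤ D)
    (hI : 4 * D ≤ haarAddCircle[f]) :
    haarAddCircle[f] / (4 * D) ≤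
      ∑ h ∈ Finset.Icc 1 K, ∫ x, ramp (f x / D / h) ∂haarAddCircle := by
  have hI' : 1 ≤ haarAddCircle[f] / (4 * D) := by rwa [one_le_div (by positivity)]
  have hf' := hf.continuous
  have hg (h : ℕ) := (lipschitzWith_ramp_div hf hD h).continuous
  calc haarAddCircle[f] / (4 * D)
      ≤ haarAddCircle[f] / (4 * D) + (haarAddCircle[f] / (4 * D) - 1) := by linarith
    _ = haarAddCircle[f] / D / 2 - 1 := by field_simp; ring
    _ = ∫ x, (f x / D / 2 - 1) ∂haarAddCircle := by
        rw [integral_sub (integrable_haarAddCircle (by fun_prop)) (integrable_const _),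
          integral_div, integral_div, integral_const, probReal_univ, one_smul]
    _ ≤ ∫ x, ∑ h ∈ Finset.Icc 1 K, ramp (f x / D / h) ∂haarAddCircle := by
        refine integral_mono (integrable_haarAddCircle (by fun_prop))
          (integrable_haarAddCircle (by fun_prop)) fun x => half_sub_one_le_sum_ramp ?_
        rw [div_div, div_le_iff₀ (by positivity)]
        exact (hfK x).trans (le_mul_of_one_le_right (by positivity) (by linarith))
    _ = ∑ h ∈ Finset.Icc 1 K, ∫ x, ramp (f x / D / h) ∂haarAddCircle :=
        integral_finsetSum _ fun h _ => integrable_haarAddCircle (hg h)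

theorem exists_measureReal_forall_comp_nsmul_le {θ : ℝ} (hθ : 0 < θ) :
    ∃ C : ℝ, ∀ (K : ℕ) (V : ℝ≥0), 1 ≤ V → ∀ f : UnitAddCircle → ℝ,
      LipschitzWith V f → (∀ x, f x ≤ K) → ∀ D : ℝ, 1 ≤ D → 4 * D ≤ haarAddCircle[f] →
      haarAddCircle.real {x : UnitAddCircle | ∀ h ∈ Finset.Icc 1 K, f (h • x) ≤ h * D}
        ≤ C * (V * K) ^ θ * (D / haarAddCircle[f]) := by
  obtain ⟨C, hC, hmeas⟩ := exists_measureReal_sum_comp_nsmul_eq_zero_le hθ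
  refine ⟨4 * C, fun K V hV f hf hfK D hD hI => ?_⟩
  have hI₀ : 0 < haarAddCircle[f] := by linarith
  have hμ := integral_div_le_sum_integral_ramp hf hfK hD hI
  calc _ ≤ haarAddCircle.real
          {x : UnitAddCircle | ∑ h ∈ Finset.Icc 1 K, ramp (f (h • x) / D / h) = 0} := by
        refine measureReal_mono fun x hx => Finset.sum_eq_zero fun h hh => ramp_of_le_one ?_
        rw [div_div]
        exact div_le_one_of_le₀ ((hx h hh).trans_eq (mul_comm _ _)) (by positivity)
    _ ≤ C * (V * K) ^ θ / ∑ h ∈ Finset.Icc 1 K, ∫ x, ramp (f x / D / h) ∂haarAddCircle :=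
        hmeas K V hV (fun h x => ramp (f x / D / h)) (lipschitzWith_ramp_div hf hD)
          (fun h x => ramp_mem_Icc _) (hμ.trans' (by rwa [one_le_div (by positivity)]))
    _ ≤ C * (V * K) ^ θ / (haarAddCircle[f] / (4 * D)) := by gcongr
    _ = 4 * C * (V * K) ^ θ * (D / haarAddCircle[f]) := by field_simp

end Dilates

section Moments

open AddCircle

theorem integral_norm_sq_sum_fourier {ι : Type*} (s : Finset ι) (b : ι → ℤ) :
    ∫ x : UnitAddCircle, ‖∑ i ∈ s, fourier (b i) x‖ ^ 2 ∂haarAddCircle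
      = ((s ×ˢ s).filter fun p => b p.1 = b p.2).card := by
  rw [← Complex.ofReal_inj, ← integral_complex_ofReal]
  have hexpand (x : UnitAddCircle) : ((‖∑ i ∈ s, fourier (b i) x‖ ^ 2 : ℝ) : ℂ)
      = ∑ p ∈ s ×ˢ s, fourier (-b p.1) x • fourier (b p.2) x := by
    rw [Complex.ofReal_pow, ← Complex.conj_mul', map_sum, Finset.sum_mul_sum, Finset.sum_product]
    simp_rw [fourier_neg, smul_eq_mul]
  simp_rw [hexpand]
  rw [integral_finsetSum _ fun p _ => integrable_haarAddCircle (by fun_prop), Finset.card_filter]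
  push_cast
  refine Finset.sum_congr rfl fun p _ => ?_
  have horth := congrFun (fourierCoeff_fourier (T := (1 : ℝ)) (b p.2)) (b p.1)
  rw [fourierCoeff, Pi.single_apply] at horth
  rw [horth]
  split_ifs <;> simp

theorem card_le_integral_norm_sq_sum_fourier {ι : Type*} (s : Finset ι) (b : ι → ℤ) :
    (s.card : ℝ) ≤ ∫ x : UnitAddCircle, ‖∑ i ∈ s, fourier (b i) x‖ ^ 2 ∂haarAddCircle := by
  classical
  rw [integral_norm_sq_sum_fourier, Nat.cast_le, ← Finset.diag_card]
  refine Finset.card_le_card fun p hp => ?_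
  obtain ⟨hp₁, hp₂⟩ := Finset.mem_diag.mp hp
  simp [hp₁, ← hp₂]

theorem integral_norm_pow_four_sum_fourier (a : ℕ → ℤ) (S : Finset ℕ) :
    ∫ x : UnitAddCircle, ‖∑ n ∈ S, fourier (a n) x‖ ^ 4 ∂haarAddCircle
      = (additiveQuadruples a S).card := by
  have hsq (x : UnitAddCircle) : ‖∑ n ∈ S, fourier (a n) x‖ ^ 4
      = ‖∑ p ∈ S ×ˢ S, fourier (a p.1 + a p.2) x‖ ^ 2 := by
    rw [show 4 = 2 * 2 from rfl, pow_mul, ← norm_pow, sq (∑ n ∈ S, fourier (a n) x),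
      Finset.sum_mul_sum, Finset.sum_product]
    simp_rw [fourier_add]
  simp_rw [hsq]
  rw [integral_norm_sq_sum_fourier _ fun p : ℕ × ℕ => a p.1 + a p.2, Nat.cast_inj]
  refine Finset.card_equiv (Equiv.prodAssoc ℕ ℕ (ℕ × ℕ)) fun q => ?_
  simp [additiveQuadruples, and_assoc]

theorem integral_norm_sq_pow_three_le {f : UnitAddCircle → ℂ} (hf : Continuous f) :
    (∫ x, ‖f x‖ ^ 2 ∂haarAddCircle) ^ 3
      ≤ (∫ x, ‖f x‖ ∂haarAddCircle) ^ 2 * ∫ x, ‖f x‖ ^ 4 ∂haarAddCircle := by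
  have hcont (p : ℝ) (hp : 0 ≤ p) : Continuous fun x => ‖f x‖ ^ p :=
    hf.norm.rpow_const fun _ => .inr hp
  have hholder := integral_mul_le_Lp_mul_Lq_of_nonneg (μ := haarAddCircle (T := 1))
    (show (3 / 2 : ℝ).HolderConjugate 3 from ⟨by norm_num, by norm_num, by norm_num⟩)
    (ae_of_all _ fun x => Real.rpow_nonneg (norm_nonneg (f x)) (2 / 3))
    (ae_of_all _ fun x => Real.rpow_nonneg (norm_nonneg (f x)) (4 / 3))
    ((hcont _ (by norm_num)).memLp_of_hasCompactSupport (.of_compactSpace _))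
    ((hcont _ (by norm_num)).memLp_of_hasCompactSupport (.of_compactSpace _))
  have hsplit (x : UnitAddCircle) :
      ‖f x‖ ^ (2 / 3 : ℝ) * ‖f x‖ ^ (4 / 3 : ℝ) = ‖f x‖ ^ 2 := by
    rw [← Real.rpow_add_of_nonneg (norm_nonneg _) (by norm_num) (by norm_num), ← Real.rpow_ofNat]
    norm_num
  have hpow (x : UnitAddCircle) : (‖f x‖ ^ (2 / 3 : ℝ)) ^ (3 / 2 : ℝ) = ‖f x‖ := by
    rw [← Real.rpow_mul (norm_nonneg _)]
    norm_num
  have hpow' (x : UnitAddCircle) : (‖f x‖ ^ (4 / 3 : ℝ)) ^ (3 : ℝ) = ‖f x‖ ^ 4 := by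
    rw [← Real.rpow_mul (norm_nonneg _), ← Real.rpow_ofNat]
    norm_num
  simp only [hsplit, hpow, hpow'] at hholder
  have h₁ : 0 ≤ ∫ x, ‖f x‖ ∂haarAddCircle := integral_nonneg fun x => norm_nonneg _
  have h₄ : 0 ≤ ∫ x, ‖f x‖ ^ 4 ∂haarAddCircle := integral_nonneg fun x => by positivity
  refine (pow_le_pow_left₀ (integral_nonneg fun x => by positivity) hholder 3).trans_eq ?_
  rw [mul_pow, ← Real.rpow_mul_natCast h₁, ← Real.rpow_mul_natCast h₄]
  norm_num

theorem card_pow_three_le_sq_integral_norm_mul (a : ℕ → ℤ) (S : Finset ℕ) :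
    (S.card : ℝ) ^ 3 ≤ (∫ x : UnitAddCircle, ‖∑ n ∈ S, fourier (a n) x‖ ∂haarAddCircle) ^ 2
      * (additiveQuadruples a S).card := by
  rw [← integral_norm_pow_four_sum_fourier]
  refine (pow_le_pow_left₀ (Nat.cast_nonneg _)
    (card_le_integral_norm_sq_sum_fourier S a) 3).trans
    (integral_norm_sq_pow_three_le (by fun_prop))

theorem lipschitzWith_fourier (n : ℤ) :
    LipschitzWith (2 * NNReal.pi * n.natAbs) (fourier n : UnitAddCircle → ℂ) := by
  refine LipschitzWith.of_dist_le_mul fun x y => ?_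
  obtain ⟨s, hs, hsnorm⟩ : ∃ s : ℝ, (s : UnitAddCircle) = x - y ∧ ‖x - y‖ = |s| := by
    obtain ⟨r, hr⟩ := QuotientAddGroup.mk_surjective (x - y)
    refine ⟨r - round r, ?_, ?_⟩
    · rw [← hr, coe_sub, sub_eq_self, coe_eq_zero_iff]
      exact ⟨round r, by simp⟩
    · rw [← hr]
      exact UnitAddCircle.norm_eq
  have hmul : (fourier n x : ℂ) = fourier n y * fourier n (s : UnitAddCircle) := by
    rw [hs, fourier_apply, fourier_apply, fourier_apply, ← Circle.coe_mul, ← toCircle_add,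
      ← smul_add, add_sub_cancel]
  have hexp : (fourier n (s : UnitAddCircle) : ℂ)
      = Complex.exp (Complex.I * (2 * Real.pi * n * s : ℝ)) := by
    rw [fourier_coe_apply]
    congr 1
    push_cast
    ring
  rw [dist_eq_norm, dist_eq_norm, hsnorm, hmul, hexp, ← mul_sub_one, norm_mul, fourier_apply,
    Circle.norm_coe, one_mul]
  refine Real.norm_exp_I_mul_ofReal_sub_one_le.trans_eq ?_
  simp [abs_of_pos Real.pi_pos]

theorem lipschitzWith_norm_sum_fourier {a : ℕ → ℤ} {S : Finset ℕ} {A : ℝ≥0}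
    (hA : ∀ n ∈ S, |(a n : ℝ)| ≤ A) :
    LipschitzWith (S.card * (2 * NNReal.pi * A))
      fun x : UnitAddCircle => ‖∑ n ∈ S, fourier (a n) x‖ := by
  refine LipschitzWith.of_dist_le_mul fun x y => (dist_norm_norm_le _ _).trans ?_
  rw [← Finset.sum_sub_distrib]
  refine (norm_sum_le_of_le S fun n hn => ?_).trans_eq (b := ∑ n ∈ S, 2 * Real.pi * A * dist x y) ?_
  · rw [← dist_eq_norm]
    refine ((lipschitzWith_fourier (a n)).dist_le_mul x y).trans ?_
    have := hA n hn
    push_cast [Nat.cast_natAbs, NNReal.coe_real_pi]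
    gcongr
  · rw [Finset.sum_const, nsmul_eq_mul]
    push_cast [NNReal.coe_real_pi]
    ring

theorem norm_sum_fourier_le_card (a : ℕ → ℤ) (S : Finset ℕ) (x : UnitAddCircle) :
    ‖∑ n ∈ S, fourier (a n) x‖ ≤ S.card :=
  (norm_sum_le_of_le S (n := fun _ => 1) fun n _ => by rw [fourier_apply, Circle.norm_coe]).trans
    (by simp)

end Moments

section Discrepancy

theorem abs_card_div_sub_le_starDisc (N : ℕ) (x : ℕ → ℝ) {β : ℝ} (hβ : β ∈ Set.Ioc (0 : ℝ) 1) :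
    |(((Finset.Icc 1 N).filter fun n => 0 ≤ x n ∧ x n < β).card : ℝ) / N - β| ≤ starDisc N x := by
  refine le_ciSup (f := fun β : Set.Ioc (0 : ℝ) 1 =>
    |(((Finset.Icc 1 N).filter fun n => 0 ≤ x n ∧ x n < (β : ℝ)).card : ℝ) / N - (β : ℝ)|)
    ⟨1, ?_⟩ ⟨β, hβ⟩
  rintro _ ⟨⟨t, ht⟩, rfl⟩
  have hcard : (((Finset.Icc 1 N).filter fun n => 0 ≤ x n ∧ x n < t).card : ℝ) ≤ N := by
    exact_mod_cast (Finset.card_filter_le _ _).trans_eq (Nat.card_Icc 1 N)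
  have hle := div_le_one_of_le₀ hcard (Nat.cast_nonneg N)
  have hnonneg : (0 : ℝ) ≤ (((Finset.Icc 1 N).filter fun n => 0 ≤ x n ∧ x n < t).card : ℝ) / N := by
    positivity
  exact abs_le.mpr ⟨by linarith [ht.2], by linarith [ht.1]⟩

variable {E : Type*} [NormedAddCommGroup E] [NormedSpace ℝ E] {f f' : ℝ → E}

theorem intervalIntegrable_sub_indicator_smul (hf' : Continuous f') (x u v : ℝ) :
    IntervalIntegrable (fun t => (t - (Set.Ioi x).indicator 1 t : ℝ) • f' t) volume u v := by
  refine IntervalIntegrable.smul_continuousOn ?_ hf'.continuousOn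
  refine (continuous_id.intervalIntegrable u v).sub (intervalIntegrable_iff.mpr ?_)
  exact (intervalIntegrable_iff.mp intervalIntegrable_const).indicator measurableSet_Ioi

theorem integral_sub_indicator_smul_deriv [CompleteSpace E] (hf : ∀ t, HasDerivAt f (f' t) t)
    (hf' : Continuous f') {x : ℝ} (hx : x ∈ Set.Ico (0 : ℝ) 1) :
    ∫ t in (0 : ℝ)..1, (t - (Set.Ioi x).indicator 1 t : ℝ) • f' t
      = f x - ∫ t in (0 : ℝ)..1, f t := by
  have hcont : Continuous f := continuous_iff_continuousAt.mpr fun t => (hf t).continuousAt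
  have hleft : ∫ t in (0 : ℝ)..x, (t - (Set.Ioi x).indicator 1 t : ℝ) • f' t
      = ∫ t in (0 : ℝ)..x, (t - 0) • f' t := by
    refine intervalIntegral.integral_congr_ae (ae_of_all _ fun t ht => ?_)
    rw [Set.uIoc_of_le hx.1] at ht
    simp [ht.2]
  have hright : ∫ t in x..1, (t - (Set.Ioi x).indicator 1 t : ℝ) • f' t
      = ∫ t in x..1, (t - 1) • f' t := by
    refine intervalIntegral.integral_congr_ae (ae_of_all _ fun t ht => ?_)
    rw [Set.uIoc_of_le hx.2.le] at ht
    simp [ht.1]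
  have hparts (r u v : ℝ) : ∫ t in u..v, (t - r) • f' t
      = (v - r) • f v - (u - r) • f u - ∫ t in u..v, f t := by
    simpa using intervalIntegral.integral_smul_deriv_eq_deriv_smul
      (u := fun t => t - r) (u' := fun _ => 1) (a := u) (b := v)
      (fun t _ => (hasDerivAt_id t).sub_const r) (fun t _ => hf t)
      intervalIntegrable_const (hf'.intervalIntegrable u v)
  rw [← intervalIntegral.integral_add_adjacent_intervals
      (intervalIntegrable_sub_indicator_smul hf' x 0 x)
      (intervalIntegrable_sub_indicator_smul hf' x x 1), hleft, hright, hparts 0 0 x, hparts 1 x 1,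
    ← intervalIntegral.integral_add_adjacent_intervals (hcont.intervalIntegrable 0 x)
      (hcont.intervalIntegrable x 1)]
  module

/-- Koksma's inequality for continuously differentiable functions. -/
theorem norm_sum_sub_integral_le_starDisc [CompleteSpace E] (hf : ∀ t, HasDerivAt f (f' t) t)
    (hf' : Continuous f') {B : ℝ} (hB : ∀ t ∈ Set.Ioc (0 : ℝ) 1, ‖f' t‖ ≤ B) (N : ℕ) {x : ℕ → ℝ}
    (hx : ∀ n, x n ∈ Set.Ico (0 : ℝ) 1) :
    ‖∑ n ∈ Finset.Icc 1 N, f (x n) - (N : ℝ) • ∫ t in (0 : ℝ)..1, f t‖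
      ≤ N * starDisc N x * B := by
  rcases N.eq_zero_or_pos with rfl | hN
  · simp
  have hsum : ∑ n ∈ Finset.Icc 1 N, f (x n) - (N : ℝ) • ∫ t in (0 : ℝ)..1, f t
      = ∫ t in (0 : ℝ)..1,
        ∑ n ∈ Finset.Icc 1 N, (t - (Set.Ioi (x n)).indicator 1 t : ℝ) • f' t := by
    rw [intervalIntegral.integral_finsetSum fun n _ =>
      intervalIntegrable_sub_indicator_smul hf' (x n) 0 1]
    simp [integral_sub_indicator_smul_deriv hf hf' (hx _), Nat.cast_smul_eq_nsmul]
  rw [hsum]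
  refine (intervalIntegral.norm_integral_le_of_norm_le_const (C := N * starDisc N x * B)
    fun t ht => ?_).trans (by simp)
  rw [Set.uIoc_of_le zero_le_one] at ht
  have hcount : ∑ n ∈ Finset.Icc 1 N, (t - (Set.Ioi (x n)).indicator 1 t : ℝ)
      = -(N * ((((Finset.Icc 1 N).filter fun n => 0 ≤ x n ∧ x n < t).card : ℝ) / N - t)) := by
    rw [mul_sub, mul_div_cancel₀ _ (Nat.cast_ne_zero.mpr hN.ne')]
    simp [Set.indicator_apply, (hx _).1]
  rw [← Finset.sum_smul, norm_smul, hcount, norm_neg, norm_mul, Real.norm_natCast, Real.norm_eq_abs]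
  have hdisc := abs_card_div_sub_le_starDisc N x ht
  exact mul_le_mul (by gcongr) (hB t ht) (norm_nonneg _)
    (mul_nonneg N.cast_nonneg ((abs_nonneg _).trans hdisc))

theorem norm_sum_fourier_le_starDisc {h : ℤ} (hh : h ≠ 0) (N : ℕ) {x : ℕ → ℝ}
    (hx : ∀ n, x n ∈ Set.Ico (0 : ℝ) 1) :
    ‖∑ n ∈ Finset.Icc 1 N, (fourier h (x n : UnitAddCircle) : ℂ)‖
      ≤ N * starDisc N x * (2 * Real.pi * |h|) := by
  have hint : ∫ t in (0 : ℝ)..1, (fourier h (t : UnitAddCircle) : ℂ) = 0 := by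
    simpa [fourierCoeff_eq_intervalIntegral _ _ 0, hh.symm] using
      congrFun (fourierCoeff_fourier (T := (1 : ℝ)) h) 0
  have hkoksma := norm_sum_sub_integral_le_starDisc (hasDerivAt_fourier 1 h) (by fun_prop)
    (B := 2 * Real.pi * |h|) (fun t _ => ?_) N hx
  · rwa [hint, smul_zero, sub_zero] at hkoksma
  · rw [norm_mul, fourier_apply, Circle.norm_coe]
    simp [abs_of_pos Real.pi_pos]

theorem fourier_nsmul_eq_fourier_fract (m : ℤ) (h : ℕ) (α : ℝ) :
    (fourier m (h • (α : UnitAddCircle)) : ℂ)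
      = fourier h ((Int.fract (m * α) : ℝ) : UnitAddCircle) := by
  have hfract : ((Int.fract (m * α) : ℝ) : UnitAddCircle) = m • (α : UnitAddCircle) := by
    rw [← AddCircle.coe_zsmul, zsmul_eq_mul, Int.fract, AddCircle.coe_sub, sub_eq_self,
      AddCircle.coe_eq_zero_iff]
    exact ⟨⌊(m : ℝ) * α⌋, by simp⟩
  rw [fourier_apply, fourier_apply, hfract, natCast_zsmul, smul_comm]

theorem norm_sum_Ioc_fourier_le_starDisc (a : ℕ → ℤ) (α : ℝ) {h : ℕ} (hh : h ≠ 0) {M N : ℕ}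
    (hMN : M ≤ N) :
    ‖∑ n ∈ Finset.Ioc M N, fourier (a n) (h • (α : UnitAddCircle))‖
      ≤ (N * starDisc N (fun n => Int.fract (a n * α))
        + M * starDisc M (fun n => Int.fract (a n * α))) * (2 * Real.pi * h) := by
  have hsplit : ∑ n ∈ Finset.Ioc M N, (fourier (a n) (h • (α : UnitAddCircle)) : ℂ)
      = ∑ n ∈ Finset.Icc 1 N, (fourier (a n) (h • (α : UnitAddCircle)) : ℂ)
        - ∑ n ∈ Finset.Icc 1 M, (fourier (a n) (h • (α : UnitAddCircle)) : ℂ) := by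
    rw [eq_sub_iff_add_eq', ← Finset.sum_union]
    · congr 1
      ext n
      grind
    · grind [Finset.disjoint_left]
  simp_rw [hsplit, fourier_nsmul_eq_fourier_fract, add_mul]
  have hle (N : ℕ) := norm_sum_fourier_le_starDisc (Int.natCast_ne_zero.mpr hh) N
    fun n => ⟨Int.fract_nonneg (a n * α), Int.fract_lt_one _⟩
  simp only [Nat.abs_cast, Int.cast_natCast] at hle
  exact (norm_sub_le _ _).trans (add_le_add (hle N) (hle M))

theorem ae_coe_of_ae_haarAddCircle {p : UnitAddCircle → Prop}
    (hp : ∀ᵐ x ∂AddCircle.haarAddCircle, p x) : ∀ᵐ α : ℝ, p α := by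
  have hvol : ∀ᵐ x : UnitAddCircle, p x := by
    rw [AddCircle.volume_eq_smul_haarAddCircle]
    exact Measure.ae_smul_measure hp _
  rw [← Measure.restrict_univ (μ := (volume : Measure ℝ)), ← iUnion_Ioc_intCast ℝ,
    ae_restrict_iUnion_iff]
  exact fun n => (UnitAddCircle.measurePreserving_mk n).quasiMeasurePreserving.ae hvol

end Discrepancy

section EnergyToDiscrepancy

open AddCircle

theorem ae_frequently_notMem_of_tendsto {X : Type*} [MeasurableSpace X] {μ : Measure X}
    {s : ℕ → Set X} (hs : Tendsto (fun k => μ (s k)) atTop (𝓝 0)) :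
    ∀ᵐ x ∂μ, ∃ᶠ k in atTop, x ∉ s k := by
  simp_rw [frequently_atTop]
  refine ae_all_iff.mpr fun N => nonpos_iff_eq_zero.mp <| ge_of_tendsto hs <|
    (eventually_ge_atTop N).mono fun k hk => measure_mono fun x hx => ?_
  by_contra hxk
  exact hx ⟨k, hk, hxk⟩

theorem integral_norm_sum_fourier_pos (a : ℕ → ℤ) {S : Finset ℕ} (hS : S.Nonempty) :
    0 < ∫ x : UnitAddCircle, ‖∑ n ∈ S, fourier (a n) x‖ ∂haarAddCircle := by
  refine (integral_nonneg fun x => norm_nonneg _).lt_of_ne' fun hzero => ?_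
  have hcube := card_pow_three_le_sq_integral_norm_mul a S
  rw [hzero, zero_pow two_ne_zero, zero_mul] at hcube
  have := hS.card_pos
  exact hcube.not_gt (by positivity)

theorem inv_integral_norm_sum_fourier_isBigO {a : ℕ → ℤ} {S : ℕ → Finset ℕ} {r : ℕ}
    (hS : ∀ k, (S k).card = k ^ r) {η : ℝ}
    (hE : (fun k => ((additiveQuadruples a (S k)).card : ℝ)) =O[atTop]
      fun k : ℕ => (k : ℝ) ^ (3 * r - 2 * η)) :
    (fun k => (∫ x : UnitAddCircle, ‖∑ n ∈ S k, fourier (a n) x‖ ∂haarAddCircle)⁻¹) =O[atTop]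
      fun k : ℕ => (k : ℝ) ^ (-η) := by
  refine IsBigO.of_pow two_ne_zero ?_
  have hinv : (fun k => ((∫ x : UnitAddCircle,
      ‖∑ n ∈ S k, fourier (a n) x‖ ∂haarAddCircle)⁻¹) ^ 2) =O[atTop]
      fun k => (((k : ℝ) ^ r) ^ 3)⁻¹ * (additiveQuadruples a (S k)).card := by
    refine IsBigO.of_bound' ?_
    filter_upwards [eventually_gt_atTop 0] with k hk
    have hpos := integral_norm_sum_fourier_pos a
      (Finset.card_pos.mp ((pow_pos hk r).trans_eq (hS k).symm))
    have hcube := card_pow_three_le_sq_integral_norm_mul a (S k)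
    rw [hS, Nat.cast_pow] at hcube
    rw [Real.norm_of_nonneg (by positivity), Real.norm_of_nonneg (by positivity), inv_pow,
      inv_mul_eq_div, inv_eq_one_div, div_le_div_iff₀ (by positivity) (by positivity)]
    linarith
  refine hinv.trans (((isBigO_refl _ _).mul hE).trans_eventuallyEq ?_)
  filter_upwards [eventually_gt_atTop 0] with k hk
  have hk0 : (0 : ℝ) < k := Nat.cast_pos.mpr hk
  simp only [Pi.pow_apply]
  rw [← pow_mul, ← Real.rpow_natCast, ← Real.rpow_neg hk0.le, ← Real.rpow_mul_natCast hk0.le,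
    ← Real.rpow_add hk0]
  congr 1
  push_cast
  ring

theorem exists_lipschitzWith_norm_sum_fourier {a : ℕ → ℤ} {p : ℝ} (hp : 0 ≤ p)
    (ha : (fun n => (a n : ℝ)) =O[atTop] fun n : ℕ => (n : ℝ) ^ p) :
    ∃ C : ℝ≥0, 1 ≤ C ∧ ∀ (N : ℕ) (S : Finset ℕ), S ⊆ Finset.Ioc 0 N →
      LipschitzWith (C * (N : ℝ≥0) ^ (1 + p))
        fun x : UnitAddCircle => ‖∑ n ∈ S, fourier (a n) x‖ := by
  obtain ⟨C, hC, hbound⟩ := bound_of_isBigO_nat_atTop ha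
  lift C to ℝ≥0 using hC.le
  refine ⟨max 1 (2 * NNReal.pi * C), le_max_left _ _, fun N S hSN => ?_⟩
  have hA (n : ℕ) (hn : n ∈ S) : |(a n : ℝ)| ≤ (C * (N : ℝ≥0) ^ p : ℝ≥0) := by
    obtain ⟨hn0, hnN⟩ := Finset.mem_Ioc.mp (hSN hn)
    have hnp : 0 < (n : ℝ) ^ p := by positivity
    refine (hbound hnp.ne').trans ?_
    rw [Real.norm_of_nonneg hnp.le]
    push_cast
    gcongr
  refine (lipschitzWith_norm_sum_fourier hA).weaken ?_
  have hcard : S.card ≤ N := by simpa using Finset.card_le_card hSN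
  calc (S.card : ℝ≥0) * (2 * NNReal.pi * (C * (N : ℝ≥0) ^ p))
      ≤ N * (2 * NNReal.pi * (C * (N : ℝ≥0) ^ p)) := by gcongr
    _ = 2 * NNReal.pi * C * (N : ℝ≥0) ^ (1 + p) := by
        rw [NNReal.rpow_one_add' (by positivity)]
        ring
    _ ≤ _ := by
        gcongr
        exact le_max_right _ _

theorem tendsto_measureReal_forall_comp_nsmul_le {f : ℕ → UnitAddCircle → ℝ} {V : ℕ → ℝ≥0}
    {K : ℕ → ℕ} {D : ℕ → ℝ} {P γ : ℝ} (hP : 0 < P) (hγ : 0 < γ) (hV : ∀ᶠ k in atTop, 1 ≤ V k)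
    (hf : ∀ k, LipschitzWith (V k) (f k)) (hK : ∀ k x, f k x ≤ K k) (hD : ∀ᶠ k in atTop, 1 ≤ D k)
    (hI : ∀ᶠ k in atTop, 0 < ∫ x, f k x ∂haarAddCircle)
    (hVK : (fun k => (V k : ℝ) * K k) =O[atTop] fun k : ℕ => (k : ℝ) ^ P)
    (hDI : (fun k => D k / ∫ x, f k x ∂haarAddCircle) =O[atTop] fun k : ℕ => (k : ℝ) ^ (-γ)) :
    Tendsto (fun k => haarAddCircle.real {x | ∀ h ∈ Finset.Icc 1 (K k), f k (h • x) ≤ h * D k})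
      atTop (𝓝 0) := by
  obtain ⟨C, hmeas⟩ := exists_measureReal_forall_comp_nsmul_le (θ := γ / 2 / P) (by positivity)
  have hlim (δ : ℝ) (hδ : 0 < δ) : Tendsto (fun k : ℕ => (k : ℝ) ^ (-δ)) atTop (𝓝 0) :=
    (tendsto_rpow_neg_atTop hδ).comp tendsto_natCast_atTop_atTop
  have hsmall : ∀ᶠ k in atTop, D k / ∫ x, f k x ∂haarAddCircle < 1 / 4 :=
    (hDI.trans_tendsto (hlim γ hγ)).eventually_lt_const (by norm_num)
  have hbound : (fun k => haarAddCircle.real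
      {x | ∀ h ∈ Finset.Icc 1 (K k), f k (h • x) ≤ h * D k}) =O[atTop]
      fun k => C * ((V k : ℝ) * K k) ^ (γ / 2 / P) * (D k / ∫ x, f k x ∂haarAddCircle) := by
    refine IsBigO.of_bound' ?_
    filter_upwards [hV, hD, hI, hsmall] with k hVk hDk hIk hk
    rw [Real.norm_of_nonneg measureReal_nonneg]
    rw [div_lt_iff₀ hIk] at hk
    exact (hmeas (K k) (V k) hVk (f k) (hf k) (hK k) (D k) hDk (by linarith)).trans
      (le_abs_self _)
  refine (hbound.trans (((hVK.rpow (by positivity) ?_).const_mul_left C).mul hDI)).trans_tendsto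
    ((hlim (γ / 2) (by positivity)).congr' ?_)
  · exact Eventually.of_forall fun k => by positivity
  · filter_upwards [eventually_gt_atTop 0] with k hk
    rw [← Real.rpow_mul (Nat.cast_nonneg k), ← Real.rpow_add (Nat.cast_pos.mpr hk),
      mul_div_cancel₀ _ hP.ne']
    ring_nf

theorem two_mul_pow_rpow_isBigO (s : ℕ) (q : ℝ) :
    (fun k : ℕ => ((2 * k ^ s : ℕ) : ℝ) ^ q) =O[atTop] fun k : ℕ => (k : ℝ) ^ (s * q) := by
  refine IsBigO.of_bound (2 ^ q) (Eventually.of_forall fun k => ?_)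
  rw [Real.norm_of_nonneg (by positivity), Real.norm_of_nonneg (by positivity),
    Real.rpow_mul (by positivity), Real.rpow_natCast]
  push_cast
  rw [Real.mul_rpow (by positivity) (by positivity)]

theorem tendsto_measureReal_forall_norm_sum_fourier_le {a : ℕ → ℤ} {p : ℝ} (hp : 0 ≤ p)
    (ha : (fun n => (a n : ℝ)) =O[atTop] fun n : ℕ => (n : ℝ) ^ p) {S : ℕ → Finset ℕ} {r s : ℕ}
    (hS : ∀ k, (S k).card = k ^ r) (hSs : ∀ k, S k ⊆ Finset.Ioc 0 (2 * k ^ s)) (hs : s ≠ 0)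
    {σ τ : ℝ} (hσ : 0 ≤ σ) (hστ : σ < τ)
    (hE : (fun k => ((additiveQuadruples a (S k)).card : ℝ)) =O[atTop]
      fun k : ℕ => (k : ℝ) ^ (3 * r - 2 * (s * τ))) :
    Tendsto (fun k : ℕ => haarAddCircle.real {x : UnitAddCircle | ∀ h ∈ Finset.Icc (1 : ℕ) (k ^ r),
        ‖∑ n ∈ S k, fourier (a n) (h • x)‖ ≤ h * (4 * Real.pi * ((2 * k ^ s : ℕ) : ℝ) ^ σ)})
      atTop (𝓝 0) := by
  obtain ⟨C, hC, hlip⟩ := exists_lipschitzWith_norm_sum_fourier hp ha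
  have hs₀ : (0 : ℝ) < s := by positivity
  have hpos : ∀ᶠ k : ℕ in atTop, 1 ≤ 2 * k ^ s := by
    filter_upwards [eventually_gt_atTop 0] with k hk
    exact Nat.one_le_iff_ne_zero.mpr (by positivity)
  refine tendsto_measureReal_forall_comp_nsmul_le (f := fun k x => ‖∑ n ∈ S k, fourier (a n) x‖)
    (K := fun k => k ^ r) (D := fun k => 4 * Real.pi * ((2 * k ^ s : ℕ) : ℝ) ^ σ)
    (P := s * (1 + p) + r) (γ := s * (τ - σ)) (by positivity) (mul_pos hs₀ (sub_pos.mpr hστ))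
    ?_ (fun k => hlip _ _ (hSs k))
    (fun k x => (norm_sum_fourier_le_card a _ x).trans_eq (by rw [hS])) ?_ ?_ ?_ ?_
  · filter_upwards [hpos] with k hk
    exact one_le_mul_of_one_le_of_one_le hC (NNReal.one_le_rpow (mod_cast hk) (by linarith))
  · filter_upwards [hpos] with k hk
    exact one_le_mul_of_one_le_of_one_le (by linarith [Real.pi_gt_three])
      (Real.one_le_rpow (mod_cast hk) hσ)
  · filter_upwards [eventually_gt_atTop 0] with k hk
    exact integral_norm_sum_fourier_pos a
      (Finset.card_pos.mp ((pow_pos hk r).trans_eq (hS k).symm))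
  · refine (((two_mul_pow_rpow_isBigO s (1 + p)).const_mul_left C).mul
      (isBigO_refl (fun k : ℕ => ((k ^ r : ℕ) : ℝ)) _)).congr' (.of_eq rfl) ?_
    filter_upwards [eventually_gt_atTop 0] with k hk
    rw [Real.rpow_add (Nat.cast_pos.mpr hk), Real.rpow_natCast, Nat.cast_pow]
  · refine (((two_mul_pow_rpow_isBigO s σ).const_mul_left (4 * Real.pi)).mul
      (inv_integral_norm_sum_fourier_isBigO hS hE)).trans_eventuallyEq ?_
    filter_upwards [eventually_gt_atTop 0] with k hk
    rw [← Real.rpow_add (Nat.cast_pos.mpr hk)]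
    ring_nf

theorem lt_mul_starDisc_or_of_lt_norm_sum_fourier {a : ℕ → ℤ} {α T : ℝ} {h M N : ℕ}
    (hh : h ≠ 0) (hMN : M ≤ N)
    (hT : h * (4 * Real.pi * T) < ‖∑ n ∈ Finset.Ioc M N, fourier (a n) (h • (α : UnitAddCircle))‖) :
    T < N * starDisc N (fun n => Int.fract (a n * α))
      ∨ T < M * starDisc M fun n => Int.fract (a n * α) := by
  by_contra! hcon
  have hpos : 0 < 2 * Real.pi * (h : ℝ) := by positivity
  nlinarith [norm_sum_Ioc_fourier_le_starDisc a α hh hMN]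

theorem ae_frequently_rpow_le_mul_starDisc {a : ℕ → ℤ} {p : ℝ} (hp : 0 ≤ p)
    (ha : (fun n => (a n : ℝ)) =O[atTop] fun n : ℕ => (n : ℝ) ^ p) {r s : ℕ} (hr : r ≠ 0)
    (hrs : r ≤ s) {σ τ : ℝ} (hσ : 0 ≤ σ) (hστ : σ < τ)
    (hE : (fun k : ℕ => ((additiveQuadruples a (Finset.Ioc (k ^ s) (k ^ s + k ^ r))).card : ℝ))
      =O[atTop] fun k : ℕ => (k : ℝ) ^ (3 * r - 2 * (s * τ))) :
    ∀ᵐ α : ℝ, ∃ᶠ N : ℕ in atTop,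
      (N : ℝ) ^ σ ≤ N * starDisc N (fun n => Int.fract (a n * α)) := by
  have hs : s ≠ 0 := by omega
  have hblock (k : ℕ) : k ^ s + k ^ r ≤ 2 * k ^ s := by
    rcases k.eq_zero_or_pos with rfl | hk
    · simp [hr, hs]
    · linarith [Nat.pow_le_pow_right hk hrs]
  have htendsto := tendsto_measureReal_forall_norm_sum_fourier_le hp ha (fun k => by simp)
    (fun k => Finset.Ioc_subset_Ioc (Nat.zero_le _) (hblock k)) hs hσ hστ hE
  simp_rw [measureReal_def, ENNReal.tendsto_toReal_zero_iff fun _ => measure_ne_top _ _]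
    at htendsto
  filter_upwards [ae_coe_of_ae_haarAddCircle (ae_frequently_notMem_of_tendsto htendsto)] with α hα
  rw [frequently_atTop]
  intro N₀
  obtain ⟨k, hk, hkN₀⟩ := (hα.and_eventually (eventually_ge_atTop N₀)).exists
  simp only [not_forall, not_le] at hk
  obtain ⟨h, hh, hlt⟩ := hk
  have hks : k ≤ k ^ s := Nat.le_self_pow hs k
  have hsize (N : ℕ) (hN : N ≤ 2 * k ^ s) : (N : ℝ) ^ σ ≤ ((2 * k ^ s : ℕ) : ℝ) ^ σ := by gcongr
  rcases lt_mul_starDisc_or_of_lt_norm_sum_fourier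
    (Nat.one_le_iff_ne_zero.mp (Finset.mem_Icc.mp hh).1) (Nat.le_add_right _ _) hlt with hN | hM
  · exact ⟨k ^ s + k ^ r, by omega, (hsize _ (hblock k)).trans hN.le⟩
  · exact ⟨k ^ s, by omega, (hsize _ (by omega)).trans hM.le⟩

end EnergyToDiscrepancy

theorem stmt4_general (c : ℝ) (hc : 1 < c)
    (a : ℕ → ℤ) (ha : ∀ n : ℕ, 1 ≤ n → a n = ⌊(n : ℝ) ^ c⌋)
    (τ : ℝ) (hτ : τ ≤ (c - 1) / 2) (hτ' : τ ≤ 3 / 10) :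
    ∀ᵐ α ∂(volume : Measure ℝ), ∀ ε > 0, ∃ᶠ N : ℕ in atTop,
      (N : ℝ) * starDisc N (fun n => Int.fract ((a n : ℝ) * α)) ≥
        (N : ℝ) ^ (τ - ε) := by
  have hτ₀ : 0 < min ((c - 1) / 2) (3 / 10) := lt_min (by linarith) (by norm_num)
  obtain ⟨σ, -, hσ, hlim⟩ := exists_seq_strictMono_tendsto' hτ₀
  have hdisc : ∀ᵐ α : ℝ, ∀ q, ∃ᶠ N : ℕ in atTop,
      (N : ℝ) ^ σ q ≤ N * starDisc N (fun n => Int.fract (a n * α)) := by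
    refine ae_all_iff.mpr fun q => ?_
    obtain ⟨ρ, hσρ, hρ⟩ := exists_between (hσ q).2
    refine ae_frequently_rpow_le_mul_starDisc (by linarith) (floor_rpow_isBigO ha)
      (r := 3) (s := 5) (by norm_num) (by norm_num) (hσ q).1.le hσρ ?_
    convert card_additiveQuadruples_isBigO hc ha (min_le_left _ _) (min_le_right _ _)
      (mul_pos (by norm_num : (0 : ℝ) < 10) (sub_pos.mpr hρ)) using 3
    push_cast
    ring
  filter_upwards [hdisc] with α hα ε hε
  obtain ⟨q, hq⟩ := (hlim.eventually_const_lt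
    ((sub_lt_self τ hε).trans_le (le_min hτ hτ'))).exists
  refine ((hα q).and_eventually (eventually_ge_atTop 1)).mono fun N hN => ?_
  exact (Real.rpow_le_rpow_of_exponent_le (mod_cast hN.2) hq.le).trans hN.1

theorem stmt4 (c : ℝ) (hc : 1 < c)
    (a : ℕ → ℤ) (ha : ∀ n : ℕ, 1 ≤ n → a n = ⌊(n : ℝ) ^ c⌋)
    (τ : ℝ)
    (hτ1 : c < 3 / 2 → τ = (c - 1) / 2)
    (hτ2 : 3 / 2 ≤ c → c < 2 → τ = 1 / 4)
    (hτ3 : 2 ≤ c → τ = 7 / 26) :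
    ∀ᵐ α ∂(volume : Measure ℝ), ∀ ε > 0, ∃ᶠ N : ℕ in atTop,
      (N : ℝ) * starDisc N (fun n => Int.fract ((a n : ℝ) * α)) ≥
        (N : ℝ) ^ (τ - ε) := by
  refine stmt4_general c hc a ha τ ?_ ?_ <;> rcases lt_or_ge c (3 / 2) with h | h <;>
    rcases lt_or_ge c 2 with h' | h' <;> simp_all only [forall_const] <;> linarith
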